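/- Let p, q : ℝ^n → (0,∞) be globally log-Hölder continuous with 1 < p⁻ ≤ p⁺ < ∞ and 1 < q⁻ ≤ q⁺ < ∞, and let h > n. Then there exists a constant c > 0 such that for every sequence (f_v)_{v≥0} of measurable functions on ℝ^n, ‖(η_{v,h} ∗ f_v)_{v≥0}‖_{L^{p(·)}(ℓ_{q(·)})} ≤ c ‖(f_v)_{v≥0}‖_{L^{p(·)}(ℓ_{q(·)})}. -/

import Mathlib

open MeasureTheory ENNReal Real Set

noncomputable section

/-- Euclidean space ℝ^n. -/
abbrev En (n : ℕ) := EuclideanSpace ℝ (Fin n)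

/-- `g` is locally log-Hölder continuous with constant `c`. -/
def LocLogHolder {n : ℕ} (c : ℝ) (g : En n → ℝ) : Prop :=
  0 < c ∧ ∀ x y : En n, |g x - g y| ≤ c / Real.log (Real.exp 1 + 1 / ‖x - y‖)

/-- `g` is globally log-Hölder continuous with local constant `c`. -/
def GlobLogHolder {n : ℕ} (c : ℝ) (g : En n → ℝ) : Prop :=
  LocLogHolder c g ∧
    ∃ (gi cd : ℝ), 0 < cd ∧ ∀ x : En n, |g x - gi| ≤ cd / Real.log (Real.exp 1 + ‖x‖)

/-- The kernel η_{v,h}(x) = 2^{nv} (1 + 2^v |x|)^{-h}. -/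
def eta (n : ℕ) (v : ℕ) (h : ℝ) (x : En n) : ℝ :=
  (2 : ℝ) ^ (n * v) * (1 + (2 : ℝ) ^ v * ‖x‖) ^ (-h)

/-- The dyadic cube Q_{v,m}. -/
def dyadicCube (n : ℕ) (v : ℤ) (m : Fin n → ℤ) : Set (En n) :=
  {x | ∀ i, (m i : ℝ) ≤ (2 : ℝ) ^ v * x i ∧ (2 : ℝ) ^ v * x i < m i + 1}

/-- Luxemburg (quasi-)norm of an ℝ≥0∞-valued function with variable exponent `p`. -/
def luxNorm {n : ℕ} (p : En n → ℝ) (F : En n → ℝ≥0∞) : ℝ≥0∞ :=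
  sInf {c : ℝ≥0∞ | 0 < c ∧ ∫⁻ x, (F x / c) ^ p x ≤ 1}

/-- The mixed Lebesgue-sequence space norm ‖(F_v)_v‖_{L^{p(·)}(ℓ_{q(·)})}. -/
def mixedNorm {n : ℕ} (p q : En n → ℝ) (F : ℕ → En n → ℝ≥0∞) : ℝ≥0∞ :=
  luxNorm p fun x => (∑' v : ℕ, F v x ^ q x) ^ (1 / q x)

/-- The sequence space norm ‖λ‖_{f^{α(·)}_{p(·),q(·)}}. -/
def seqNorm {n : ℕ} (α p q : En n → ℝ) (lam : ℕ → (Fin n → ℤ) → ℂ) : ℝ≥0∞ :=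
  mixedNorm p q fun v x =>
    ∑' m : Fin n → ℤ,
      ENNReal.ofReal ((2 : ℝ) ^ ((v : ℝ) * (α x + n / 2)) * ‖lam v m‖) *
        (dyadicCube n (v : ℤ) m).indicator (fun _ => (1 : ℝ≥0∞)) x

/-- The sequence space norm ‖λ‖_{f^{α(·)}_{∞,q}}. -/
def seqNormInf {n : ℕ} (α : En n → ℝ) (q : ℝ) (lam : ℕ → (Fin n → ℤ) → ℂ) : ℝ≥0∞ :=
  ⨆ (vQ : ℤ) (mQ : Fin n → ℤ),
    volume (dyadicCube n vQ mQ) ^ (-(1 / q)) *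
      (∑' v : ℕ, if vQ ≤ (v : ℤ) then
          ∫⁻ x in dyadicCube n vQ mQ,
            ∑' m : Fin n → ℤ,
              ENNReal.ofReal ((2 : ℝ) ^ ((v : ℝ) * (α x + n / 2) * q) * ‖lam v m‖ ^ q) *
                (dyadicCube n (v : ℤ) m).indicator (fun _ => (1 : ℝ≥0∞)) x
        else 0) ^ (1 / q)

/-- The Calderón product (quasi-)norm associated to two sequence space norms. -/
def calderonNorm {n : ℕ} (N0 N1 : (ℕ → (Fin n → ℤ) → ℂ) → ℝ≥0∞) (θ : ℝ)
    (lam : ℕ → (Fin n → ℤ) → ℂ) : ℝ≥0∞ :=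
  sInf {M : ℝ≥0∞ | ∃ μ ν : ℕ → (Fin n → ℤ) → ℂ, N0 μ ≤ 1 ∧ N1 ν ≤ 1 ∧
    ∀ v m, ENNReal.ofReal ‖lam v m‖ ≤
      M * ENNReal.ofReal ‖μ v m‖ ^ (1 - θ) * ENNReal.ofReal ‖ν v m‖ ^ θ}

/-!
The kernel `η_{v,h}` is dominated by a geometric series in `k` of averages over cells of level
`v - k` of the dyadic grids shifted by `0` or `1 / 3` in each coordinate, plus a tail
`2^{(n - h) v} η_{0,h}`. The tail is controlled by Young's inequality with an integrable bounded
kernel, so the matter reduces to the averages `f_v ↦ avg_v f_v` over the cells of one grid.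

Let `s` be the pointwise `ℓ^{q(·)}` norm of a normalised sequence plus the weight
`(e + |x|)^{-(n+1)}`. Then `f_v ≤ g_v^{1/q} s^{1 - 1/q}`, where the shares `g_v` sum to at most
`3 s`. All averages of `s` and `g_v` are moderate: they lie between two powers of `2^v (e + |x|)`.
Log-Hölder continuity makes a change of exponent inside a cell harmless for moderate quantities,
so Hölder's inequality with the variable exponent `q` gives
`avg_v f_v ≲ (avg_v g_v)^{1/q} (avg_v s)^{1 - 1/q}`, and hence
`‖(avg_v f_v)_v‖_{ℓ^q} ≲ ∑_v avg_v g_v + sup_v avg_v s`. In `L^{p(·)}` the sum is bounded by a dual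
Doob inequality, which follows by telescoping because averaging is self-adjoint, and the supremum
by the dyadic maximal inequality, which moderateness reduces to the constant exponent `p⁻`.
-/

section Powers

theorem rpow_le_rpow_add_mul_sub {a b p : ℝ} (ha : 0 ≤ a) (hab : a ≤ b) (hp : 1 ≤ p) :
    b ^ p ≤ a ^ p + p * b ^ (p - 1) * (b - a) := by
  rcases (ha.trans hab).eq_or_lt with rfl | hb
  · simp [hab.antisymm ha]
  have bernoulli : 1 + p * (a / b - 1) ≤ (a / b) ^ p := by
    have hs : -1 ≤ a / b - 1 := by linarith [div_nonneg ha hb.le]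
    simpa using one_add_mul_self_le_rpow_one_add hs hp
  rw [Real.div_rpow ha hb.le, le_div_iff₀ (Real.rpow_pos_of_pos hb p)] at bernoulli
  have hpow : b ^ p = b ^ (p - 1) * b := by rw [← Real.rpow_add_one hb.ne', sub_add_cancel]
  have : (1 + p * (a / b - 1)) * b ^ p = b ^ p - p * b ^ (p - 1) * (b - a) := by
    rw [hpow]; field_simp; ring
  linarith

variable {p : ℝ}

theorem rpow_sub_one_mul_self (a : ℝ≥0∞) (hp : 1 ≤ p) : a ^ (p - 1) * a = a ^ p := by
  simpa using (ENNReal.rpow_add_of_nonneg (x := a) (p - 1) 1 (by linarith) zero_le_one).symm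

theorem add_rpow_le_rpow_add_mul (a d : ℝ≥0∞) (hp : 1 ≤ p) :
    (a + d) ^ p ≤ a ^ p + ENNReal.ofReal p * (a + d) ^ (p - 1) * d := by
  have hp0 : 0 < p := by linarith
  rcases eq_or_ne a ∞ with rfl | ha
  · simp [hp0]
  rcases eq_or_ne d ∞ with rfl | hd
  · have : ENNReal.ofReal p * (∞ : ℝ≥0∞) ^ (p - 1) ≠ 0 := by
      simp [hp0, ENNReal.rpow_eq_zero_iff, hp]
    simp [ENNReal.mul_top this]
  obtain ⟨x, hx, rfl⟩ : ∃ x, 0 ≤ x ∧ ENNReal.ofReal x = a :=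
    ⟨a.toReal, toReal_nonneg, ofReal_toReal ha⟩
  obtain ⟨y, hy, rfl⟩ : ∃ y, 0 ≤ y ∧ ENNReal.ofReal y = d :=
    ⟨d.toReal, toReal_nonneg, ofReal_toReal hd⟩
  have key := rpow_le_rpow_add_mul_sub hx (le_add_of_nonneg_right hy) hp
  rw [add_sub_cancel_left] at key
  rw [← ENNReal.ofReal_add hx hy, ENNReal.ofReal_rpow_of_nonneg hx hp0.le,
    ENNReal.ofReal_rpow_of_nonneg (by positivity) hp0.le,
    ENNReal.ofReal_rpow_of_nonneg (by positivity) (by linarith), ← ENNReal.ofReal_mul hp0.le,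
    ← ENNReal.ofReal_mul (by positivity), ← ENNReal.ofReal_add (by positivity) (by positivity)]
  exact ENNReal.ofReal_le_ofReal key

theorem mul_rpow_sub_one_mul_le (D F S : ℝ≥0∞) (hp : 1 ≤ p) :
    D * (F ^ (p - 1) * S) ≤ F ^ p / 2 + (2 * D) ^ p * S ^ p := by
  rcases le_total (2 * (D * S)) F with h | h
  · have hDS : D * S ≤ F / 2 := by
      rwa [ENNReal.le_div_iff_mul_le (by simp) (by simp), mul_comm]
    calc D * (F ^ (p - 1) * S) = F ^ (p - 1) * (D * S) := by ring
      _ ≤ F ^ (p - 1) * (F / 2) := by gcongr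
      _ = F ^ p / 2 := by rw [← mul_div_assoc, rpow_sub_one_mul_self F hp]
      _ ≤ _ := le_self_add
  · calc D * (F ^ (p - 1) * S) ≤ (2 * (D * S)) ^ (p - 1) * (2 * (D * S)) := by
          rw [mul_left_comm]
          exact mul_le_mul' (by gcongr) (le_mul_of_one_le_left' one_le_two)
      _ = (2 * D) ^ p * S ^ p := by
          rw [rpow_sub_one_mul_self _ hp, ← mul_assoc,
            ENNReal.mul_rpow_of_nonneg _ _ (by linarith)]
      _ ≤ _ := le_add_self

theorem le_two_mul_of_le_half_add {I J : ℝ≥0∞} (hI : I ≠ ∞) (h : I ≤ I / 2 + J) : I ≤ 2 * J := by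
  have half : I / 2 ≤ J := by
    refine (ENNReal.add_le_add_iff_left (ENNReal.div_lt_top hI two_ne_zero).ne).1 ?_
    rwa [ENNReal.add_halves]
  rwa [ENNReal.div_le_iff two_ne_zero ofNat_ne_top, mul_comm] at half

theorem le_add_rpow_mul_rpow {a : ℝ≥0∞} (ha₀ : a ≠ 0) (ha : a ≠ ∞) (g : ℝ≥0∞) (hp : 1 ≤ p) :
    g ≤ a + a ^ (1 - p) * g ^ p := by
  rcases le_total g a with h | h
  · exact h.trans le_self_add
  · calc g = a ^ (1 - p) * (a ^ (p - 1) * g) := by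
          rw [← mul_assoc, ← ENNReal.rpow_add _ _ ha₀ ha]; simp
      _ ≤ a ^ (1 - p) * (g ^ (p - 1) * g) := by gcongr
      _ = a ^ (1 - p) * g ^ p := by rw [rpow_sub_one_mul_self g hp]
      _ ≤ _ := le_add_self

theorem tsum_mul_rpow_le {ι : Type*} (w f : ι → ℝ≥0∞) (hp : 1 ≤ p) :
    (∑' i, w i * f i) ^ p ≤ (∑' i, w i) ^ (p - 1) * ∑' i, w i * f i ^ p := by
  have hp0 : 0 < p := by linarith
  have inner : ∑' i, w i * f i ≤ (∑' i, w i) ^ (1 - p⁻¹) * (∑' i, w i * f i ^ p) ^ p⁻¹ := by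
    rw [ENNReal.tsum_eq_iSup_sum]
    refine iSup_le fun s => (ENNReal.inner_le_weight_mul_Lp_of_nonneg s hp w f).trans ?_
    gcongr
    · exact sub_nonneg.2 (inv_le_one_of_one_le₀ hp)
    · exact ENNReal.sum_le_tsum s
    · exact ENNReal.sum_le_tsum s
  calc _ ≤ ((∑' i, w i) ^ (1 - p⁻¹) * (∑' i, w i * f i ^ p) ^ p⁻¹) ^ p := by gcongr
    _ = _ := by
      rw [ENNReal.mul_rpow_of_nonneg _ _ hp0.le, ENNReal.rpow_inv_rpow hp0.ne',
        ← ENNReal.rpow_mul, sub_mul, one_mul, inv_mul_cancel₀ hp0.ne']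

end Powers

section EllNorm

/-- The `ℓ^r` norm of a sequence in `[0, ∞]`, so that `mixedNorm p q F` is the Luxemburg norm of
`x ↦ ellNorm (q x) (F · x)`. -/
def ellNorm (r : ℝ) (a : ℕ → ℝ≥0∞) : ℝ≥0∞ :=
  (∑' v, a v ^ r) ^ (1 / r)

variable {r : ℝ} {a b : ℕ → ℝ≥0∞}

theorem ellNorm_rpow (hr : 0 < r) (a : ℕ → ℝ≥0∞) : ellNorm r a ^ r = ∑' v, a v ^ r := by
  rw [ellNorm, ← ENNReal.rpow_mul, one_div_mul_cancel hr.ne', ENNReal.rpow_one]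

theorem ellNorm_le_iff (hr : 0 < r) {c : ℝ≥0∞} : ellNorm r a ≤ c ↔ ∑' v, a v ^ r ≤ c ^ r := by
  rw [← ENNReal.rpow_le_rpow_iff hr, ellNorm_rpow hr]

theorem ellNorm_mono (hr : 0 < r) (h : ∀ v, a v ≤ b v) : ellNorm r a ≤ ellNorm r b := by
  unfold ellNorm
  gcongr
  exact h _

theorem le_ellNorm (hr : 0 < r) (a : ℕ → ℝ≥0∞) (v : ℕ) : a v ≤ ellNorm r a := by
  rw [← ENNReal.rpow_le_rpow_iff hr, ellNorm_rpow hr]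
  exact ENNReal.le_tsum v

theorem ellNorm_const_mul (hr : 0 < r) (c : ℝ≥0∞) (a : ℕ → ℝ≥0∞) :
    ellNorm r (fun v => c * a v) = c * ellNorm r a := by
  simp_rw [ellNorm, ENNReal.mul_rpow_of_nonneg _ _ hr.le]
  rw [ENNReal.tsum_mul_left, ENNReal.mul_rpow_of_nonneg _ _ (by positivity), ← ENNReal.rpow_mul,
    mul_one_div_cancel hr.ne', ENNReal.rpow_one]

theorem ellNorm_le_tsum (hr : 1 ≤ r) (a : ℕ → ℝ≥0∞) : ellNorm r a ≤ ∑' v, a v := by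
  rw [ellNorm_le_iff (by linarith)]
  calc ∑' v, a v ^ r = ∑' v, a v ^ (r - 1) * a v := by simp_rw [rpow_sub_one_mul_self _ hr]
    _ ≤ ∑' v, (∑' w, a w) ^ (r - 1) * a v := by gcongr with v; exact ENNReal.le_tsum v
    _ = (∑' v, a v) ^ r := by rw [ENNReal.tsum_mul_left, rpow_sub_one_mul_self _ hr]

theorem ellNorm_tsum_le {ι : Type*} (hr : 1 ≤ r) (a : ι → ℕ → ℝ≥0∞) :
    ellNorm r (fun v => ∑' i, a i v) ≤ ∑' i, ellNorm r (a i) := by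
  have hr0 : 0 < r := by linarith
  set m : ι → ℝ≥0∞ := fun i => ellNorm r (a i)
  rcases eq_or_ne (∑' i, m i) ∞ with h | h
  · simp [h]
  have hm : ∀ i, m i ≠ ∞ := fun i => ne_top_of_le_ne_top h (ENNReal.le_tsum i)
  have normalize : ∀ i v, a i v = m i * (a i v / m i) := fun i v =>
    (ENNReal.mul_div_cancel' (fun h0 => le_zero_iff.1 ((le_ellNorm hr0 (a i) v).trans h0.le))
      (fun h0 => absurd h0 (hm i))).symm
  have unit : ∀ i, ∑' v, (a i v / m i) ^ r ≤ 1 := fun i => by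
    simp_rw [div_eq_mul_inv, ENNReal.mul_rpow_of_nonneg _ _ hr0.le]
    rw [ENNReal.tsum_mul_right, ← ellNorm_rpow hr0, ← ENNReal.mul_rpow_of_nonneg _ _ hr0.le]
    exact ENNReal.rpow_le_one (ENNReal.mul_inv_le_one _) hr0.le
  rw [ellNorm_le_iff hr0]
  calc ∑' v, (∑' i, a i v) ^ r = ∑' v, (∑' i, m i * (a i v / m i)) ^ r := by
        simp_rw [← normalize]
    _ ≤ ∑' v, (∑' i, m i) ^ (r - 1) * ∑' i, m i * (a i v / m i) ^ r := by
        gcongr with v; exact tsum_mul_rpow_le _ _ hr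
    _ = (∑' i, m i) ^ (r - 1) * ∑' i, m i * ∑' v, (a i v / m i) ^ r := by
        rw [ENNReal.tsum_mul_left, ENNReal.tsum_comm]; simp_rw [ENNReal.tsum_mul_left]
    _ ≤ (∑' i, m i) ^ (r - 1) * ∑' i, m i * 1 := by gcongr with i; exact unit i
    _ = (∑' i, m i) ^ r := by simp_rw [mul_one]; exact rpow_sub_one_mul_self _ hr

theorem ellNorm_comp_add_le (hr : 0 < r) (a : ℕ → ℝ≥0∞) (k : ℕ) :
    ellNorm r (fun v => a (v + k)) ≤ ellNorm r a := by
  rw [ellNorm_le_iff hr, ellNorm_rpow hr]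
  exact ENNReal.tsum_comp_le_tsum_of_injective (add_left_injective k) fun v => a v ^ r

theorem ellNorm_zero_pad (hr : 0 < r) (a : ℕ → ℝ≥0∞) (k : ℕ) :
    ellNorm r (fun v => if k ≤ v then a v else 0) = ellNorm r fun v => a (v + k) := by
  have hsupp : Function.support (fun v => (if k ≤ v then a v else 0) ^ r) ⊆ range (· + k) := by
    intro v hv
    by_cases hkv : k ≤ v
    · exact ⟨v - k, Nat.sub_add_cancel hkv⟩
    · simp [hkv, hr] at hv
  rw [ellNorm, ← (add_left_injective k).tsum_eq hsupp]
  simp [ellNorm]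

end EllNorm

section Luxemburg

variable {n : ℕ} {p q : En n → ℝ} {F G : En n → ℝ≥0∞}

theorem luxNorm_mono (hp : ∀ x, 0 ≤ p x) (h : ∀ x, F x ≤ G x) : luxNorm p F ≤ luxNorm p G := by
  refine sInf_le_sInf fun c hc => ⟨hc.1, (lintegral_mono fun x => ?_).trans hc.2⟩
  have := hp x
  gcongr
  exact h x

theorem luxNorm_const_mul_le (p : En n → ℝ) (F : En n → ℝ≥0∞) {a : ℝ≥0∞} (ha₀ : a ≠ 0)
    (ha : a ≠ ∞) : luxNorm p (fun x => a * F x) ≤ a * luxNorm p F := by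
  rw [← ENNReal.div_le_iff' ha₀ ha]
  refine le_sInf fun c hc => ?_
  rw [ENNReal.div_le_iff' ha₀ ha]
  refine sInf_le ⟨ENNReal.mul_pos ha₀ hc.1.ne', ?_⟩
  simpa only [ENNReal.mul_div_mul_left _ _ ha₀ ha] using hc.2

theorem lintegral_div_rpow_le_one (hp : ∀ x, 0 ≤ p x) {c : ℝ≥0∞} (hc : luxNorm p F < c) :
    ∫⁻ x, (F x / c) ^ p x ≤ 1 := by
  obtain ⟨c', hc', hlt⟩ := sInf_lt_iff.1 hc
  refine (lintegral_mono fun x => ?_).trans hc'.2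
  have := hp x
  gcongr

theorem luxNorm_le_mul_of_lintegral_le (hp : ∀ x, 1 ≤ p x) {C : ℝ≥0∞} (hC₁ : 1 ≤ C) (hC : C ≠ ∞)
    (h : ∀ c : ℝ≥0∞, c ≠ 0 → c ≠ ∞ → ∫⁻ x, (F x / c) ^ p x ≤ 1 → ∫⁻ x, (G x / c) ^ p x ≤ C) :
    luxNorm p G ≤ C * luxNorm p F := by
  have hC₀ : C ≠ 0 := (zero_lt_one.trans_le hC₁).ne'
  rw [← ENNReal.div_le_iff' hC₀ hC]
  refine le_sInf fun c hc => ?_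
  rw [ENNReal.div_le_iff' hC₀ hC]
  rcases eq_or_ne c ∞ with rfl | hct
  · simp [ENNReal.mul_top hC₀]
  refine sInf_le ⟨ENNReal.mul_pos hC₀ hc.1.ne', ?_⟩
  have scale : ∀ x, (G x / (C * c)) ^ p x ≤ C⁻¹ * (G x / c) ^ p x := fun x => by
    have hp0 : 0 ≤ p x := by linarith [hp x]
    rw [show G x / (C * c) = C⁻¹ * (G x / c) by
      rw [div_eq_mul_inv, div_eq_mul_inv, ENNReal.mul_inv (.inl hC₀) (.inl hC)]; ring,
      ENNReal.mul_rpow_of_nonneg _ _ hp0]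
    gcongr
    exact ENNReal.rpow_le_self_of_le_one (ENNReal.inv_le_one.2 hC₁) (hp x)
  calc ∫⁻ x, (G x / (C * c)) ^ p x ≤ ∫⁻ x, C⁻¹ * (G x / c) ^ p x := lintegral_mono scale
    _ = C⁻¹ * ∫⁻ x, (G x / c) ^ p x := lintegral_const_mul' _ _ (ENNReal.inv_ne_top.2 hC₀)
    _ ≤ C⁻¹ * C := by gcongr; exact h c hc.1.ne' hct hc.2
    _ = 1 := ENNReal.inv_mul_cancel hC₀ hC

theorem luxNorm_tsum_le {ι : Type*} [Countable ι] (hp : Measurable p) (hp1 : ∀ x, 1 ≤ p x)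
    {F : ι → En n → ℝ≥0∞} (hF : ∀ i, Measurable (F i)) :
    luxNorm p (fun x => ∑' i, F i x) ≤ ∑' i, luxNorm p (F i) := by
  have hp0 : ∀ x, 0 ≤ p x := fun x => zero_le_one.trans (hp1 x)
  refine ENNReal.le_of_forall_pos_le_add fun ε hε hfin => ?_
  obtain ⟨δ, hδ, hsum⟩ := ENNReal.exists_pos_sum_of_countable (coe_pos.2 hε).ne' ι
  set m : ι → ℝ≥0∞ := fun i => luxNorm p (F i) + δ i
  set M : ℝ≥0∞ := ∑' i, luxNorm p (F i) + ε
  have hM₀ : M ≠ 0 := by simp [M, hε.ne']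
  have hM : M ≠ ∞ := by simp [M, hfin.ne]
  have hmM : ∑' i, m i ≤ M := by
    rw [ENNReal.tsum_add]; exact add_le_add le_rfl hsum.le
  have hm₀ : ∀ i, m i ≠ 0 := fun i => by simp [m, (hδ i).ne']
  have hm : ∀ i, m i ≠ ∞ := fun i => ne_top_of_le_ne_top hM ((ENNReal.le_tsum i).trans hmM)
  have unit : ∀ i, ∫⁻ x, (F i x / m i) ^ p x ≤ 1 := fun i =>
    lintegral_div_rpow_le_one hp0 (ENNReal.lt_add_right
      (fun h => hm i (by simp [m, h])) (coe_pos.2 (hδ i)).ne')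
  have weights : ∑' i, m i / M ≤ 1 := by
    simp_rw [div_eq_mul_inv]
    rw [ENNReal.tsum_mul_right]
    exact ENNReal.div_le_of_le_mul (by simpa using hmM)
  have jensen : ∀ x, ((∑' i, F i x) / M) ^ p x ≤ ∑' i, m i / M * (F i x / m i) ^ p x := fun x => by
    have : (∑' i, F i x) / M = ∑' i, m i / M * (F i x / m i) := by
      rw [div_eq_mul_inv, ← ENNReal.tsum_mul_right]
      refine tsum_congr fun i => ?_
      calc F i x * M⁻¹ = m i * (F i x / m i) * M⁻¹ := by
            rw [ENNReal.mul_div_cancel (hm₀ i) (hm i)]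
        _ = m i / M * (F i x / m i) := mul_right_comm _ _ _
    rw [this]
    refine (tsum_mul_rpow_le _ _ (hp1 x)).trans (mul_le_of_le_one_left' ?_)
    exact ENNReal.rpow_le_one weights (sub_nonneg.2 (hp1 x))
  refine sInf_le ⟨pos_iff_ne_zero.2 hM₀, ?_⟩
  calc ∫⁻ x, ((∑' i, F i x) / M) ^ p x ≤ ∫⁻ x, ∑' i, m i / M * (F i x / m i) ^ p x :=
        lintegral_mono jensen
    _ = ∑' i, m i / M * ∫⁻ x, (F i x / m i) ^ p x := by
        have meas : ∀ i, Measurable fun x => (F i x / m i) ^ p x := fun i =>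
          ((hF i).div_const _).pow hp
        rw [lintegral_tsum fun i => ((meas i).const_mul _).aemeasurable]
        simp_rw [lintegral_const_mul _ (meas _)]
    _ ≤ ∑' i, m i / M * 1 := by gcongr with i; exact unit i
    _ ≤ 1 := by simpa using weights

end Luxemburg

section MixedNorm

variable {n : ℕ} {p q : En n → ℝ} {F G : ℕ → En n → ℝ≥0∞}

theorem mixedNorm_eq_luxNorm (p q : En n → ℝ) (F : ℕ → En n → ℝ≥0∞) :
    mixedNorm p q F = luxNorm p fun x => ellNorm (q x) (F · x) := rfl

theorem measurable_ellNorm (hq : Measurable q) (hF : ∀ v, Measurable (F v)) :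
    Measurable fun x => ellNorm (q x) (F · x) :=
  (Measurable.tsum fun v => (hF v).pow hq).pow (hq.const_div 1)

theorem mixedNorm_mono (hp : ∀ x, 0 ≤ p x) (hq : ∀ x, 0 < q x) (h : ∀ v x, F v x ≤ G v x) :
    mixedNorm p q F ≤ mixedNorm p q G :=
  luxNorm_mono hp fun x => ellNorm_mono (hq x) fun v => h v x

theorem mixedNorm_const_mul_le (p : En n → ℝ) (hq : ∀ x, 0 < q x) (F : ℕ → En n → ℝ≥0∞)
    {a : ℝ≥0∞} (ha₀ : a ≠ 0) (ha : a ≠ ∞) :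
    mixedNorm p q (fun v x => a * F v x) ≤ a * mixedNorm p q F := by
  simp_rw [mixedNorm_eq_luxNorm, ellNorm_const_mul (hq _)]
  exact luxNorm_const_mul_le _ _ ha₀ ha

theorem mixedNorm_tsum_le {ι : Type*} [Countable ι] (hp : Measurable p) (hp1 : ∀ x, 1 ≤ p x)
    (hq : Measurable q) (hq1 : ∀ x, 1 ≤ q x) {F : ι → ℕ → En n → ℝ≥0∞}
    (hF : ∀ i v, Measurable (F i v)) :
    mixedNorm p q (fun v x => ∑' i, F i v x) ≤ ∑' i, mixedNorm p q (F i) :=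
  (luxNorm_mono (fun x => zero_le_one.trans (hp1 x)) fun x =>
    ellNorm_tsum_le (hq1 x) fun i v => F i v x).trans
      (luxNorm_tsum_le hp hp1 fun i => measurable_ellNorm hq (hF i))

theorem mixedNorm_add_le (hp : Measurable p) (hp1 : ∀ x, 1 ≤ p x) (hq : Measurable q)
    (hq1 : ∀ x, 1 ≤ q x) (hF : ∀ v, Measurable (F v)) (hG : ∀ v, Measurable (G v)) :
    mixedNorm p q (fun v x => F v x + G v x) ≤ mixedNorm p q F + mixedNorm p q G := by
  simpa [tsum_bool] using mixedNorm_tsum_le hp hp1 hq hq1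
    (F := fun i : Bool => cond i F G) (Bool.rec hG hF)

theorem mixedNorm_le_mul_of_lintegral_le (hp : ∀ x, 1 ≤ p x) (hq : ∀ x, 0 < q x) {C : ℝ≥0∞}
    (hC₁ : 1 ≤ C) (hC : C ≠ ∞)
    (h : ∀ c : ℝ≥0∞, c ≠ ∞ → ∫⁻ x, ellNorm (q x) (fun v => c * F v x) ^ p x ≤ 1 →
      ∫⁻ x, ellNorm (q x) (fun v => c * G v x) ^ p x ≤ C) :
    mixedNorm p q G ≤ C * mixedNorm p q F := by
  simp_rw [mixedNorm_eq_luxNorm]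
  refine luxNorm_le_mul_of_lintegral_le hp hC₁ hC fun c hc₀ _ => ?_
  simp_rw [ENNReal.div_eq_inv_mul, ← ellNorm_const_mul (hq _)]
  exact h c⁻¹ (ENNReal.inv_ne_top.2 hc₀)

theorem mixedNorm_comp_add_le (hp : ∀ x, 0 ≤ p x) (hq : ∀ x, 0 < q x) (F : ℕ → En n → ℝ≥0∞)
    (k : ℕ) : mixedNorm p q (fun v => F (v + k)) ≤ mixedNorm p q F :=
  luxNorm_mono hp fun x => ellNorm_comp_add_le (hq x) (F · x) k

theorem mixedNorm_zero_pad (p : En n → ℝ) (hq : ∀ x, 0 < q x) (F : ℕ → En n → ℝ≥0∞) (k : ℕ) :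
    mixedNorm p q (fun v x => if k ≤ v then F v x else 0) = mixedNorm p q fun v => F (v + k) :=
  congrArg (luxNorm p) (funext fun x => ellNorm_zero_pad (hq x) (F · x) k)

end MixedNorm

section Scale

variable {n : ℕ}

/-- The scale `2^v (e + |x|)` at level `v`; its logarithm is comparable to the logarithms in both
log-Hölder conditions for points at distance about `2^{-v}`. -/
def scale (v : ℕ) (x : En n) : ℝ :=
  2 ^ v * (Real.exp 1 + ‖x‖)

theorem exp_one_le_scale (v : ℕ) (x : En n) : Real.exp 1 ≤ scale v x :=
  calc Real.exp 1 ≤ 1 * (Real.exp 1 + ‖x‖) := by linarith [norm_nonneg x]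
    _ ≤ scale v x := by unfold scale; gcongr; exact one_le_pow₀ one_le_two

theorem two_le_scale (v : ℕ) (x : En n) : 2 ≤ scale v x := by
  linarith [exp_one_le_scale v x, Real.add_one_le_exp (1 : ℝ)]

theorem scale_pos (v : ℕ) (x : En n) : 0 < scale v x :=
  zero_lt_two.trans_le (two_le_scale v x)

theorem one_le_ofReal_scale (v : ℕ) (x : En n) : 1 ≤ ENNReal.ofReal (scale v x) :=
  ENNReal.one_le_ofReal.2 (one_le_two.trans (two_le_scale v x))

theorem log_scale_nonneg (v : ℕ) (x : En n) : 0 ≤ Real.log (scale v x) :=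
  Real.log_nonneg (one_le_two.trans (two_le_scale v x))

theorem scale_eq_two_pow_mul (v : ℕ) (x : En n) : scale v x = 2 ^ v * scale 0 x := by
  simp [scale]

theorem scale_mono (x : En n) : Monotone fun v => scale v x := fun w v hwv => by
  simp only [scale]
  gcongr
  exact one_le_two

theorem two_pow_le_scale (v : ℕ) (x : En n) : 2 ^ v ≤ scale v x := by
  rw [scale_eq_two_pow_mul]
  exact le_mul_of_one_le_right (by positivity) (one_le_two.trans (two_le_scale 0 x))

theorem measurable_scale (v : ℕ) : Measurable (scale v : En n → ℝ) := by
  unfold scale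
  fun_prop

/-- The integrable weight `(e + |x|)^{-(n+1)}`, added to functions to bound their averages from
below. -/
def tailWeight (x : En n) : ℝ≥0∞ :=
  ENNReal.ofReal (scale 0 x) ^ (-((n : ℝ) + 1))

theorem measurable_tailWeight : Measurable (tailWeight : En n → ℝ≥0∞) :=
  (measurable_scale 0).ennreal_ofReal.pow_const _

theorem tailWeight_le_one (x : En n) : tailWeight x ≤ 1 := by
  rw [tailWeight, ENNReal.rpow_neg, ENNReal.inv_le_one]
  exact ENNReal.one_le_rpow (one_le_ofReal_scale 0 x) (by positivity)

theorem tailWeight_ne_zero (x : En n) : tailWeight x ≠ 0 := by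
  simp [tailWeight, ENNReal.rpow_eq_zero_iff, scale_pos]

theorem lintegral_tailWeight_ne_top : ∫⁻ x : En n, tailWeight x ≠ ∞ := by
  have hn : (Module.finrank ℝ (En n) : ℝ) < (n : ℝ) + 1 := by simp
  refine ne_top_of_le_ne_top (finite_integral_one_add_norm (μ := volume) hn).ne
    (lintegral_mono fun x => ?_)
  rw [tailWeight, ENNReal.ofReal_rpow_of_pos (scale_pos 0 x)]
  refine ENNReal.ofReal_le_ofReal (Real.rpow_le_rpow_of_nonpos (by positivity) ?_ (by linarith))
  simp only [scale, pow_zero, one_mul]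
  linarith [Real.add_one_le_exp (1 : ℝ)]

/-- `A` lies between the powers `-K` and `K` of `scale v x`. For such `A`, a change of the exponent
by a multiple of `1 / log (scale v x)` costs only a constant factor. -/
def IsModerate (K : ℝ) (v : ℕ) (x : En n) (A : ℝ≥0∞) : Prop :=
  ENNReal.ofReal (scale v x) ^ (-K) ≤ A ∧ A ≤ ENNReal.ofReal (scale v x) ^ K

namespace IsModerate

variable {K : ℝ} {v : ℕ} {x : En n} {A : ℝ≥0∞}

theorem ne_top (hK : 0 ≤ K) (h : IsModerate K v x A) : A ≠ ∞ :=
  ne_top_of_le_ne_top (ENNReal.rpow_ne_top_of_nonneg hK ofReal_ne_top) h.2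

theorem ne_zero (h : IsModerate K v x A) : A ≠ 0 := by
  refine ((pos_iff_ne_zero.2 ?_).trans_le h.1).ne'
  simp [ENNReal.rpow_eq_zero_iff, scale_pos]

theorem half (h : IsModerate K v x A) : IsModerate (K + 1) v x (A / 2) := by
  have hs₀ : ENNReal.ofReal (scale v x) ≠ 0 := by simp [scale_pos]
  have two_le : 2 ≤ ENNReal.ofReal (scale v x) := by
    simpa using ENNReal.ofReal_le_ofReal (two_le_scale v x)
  constructor
  · rw [neg_add, ENNReal.rpow_add _ _ hs₀ ofReal_ne_top, ENNReal.rpow_neg_one, div_eq_mul_inv]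
    exact mul_le_mul' h.1 (ENNReal.inv_le_inv.2 two_le)
  · refine ENNReal.half_le_self.trans (h.2.trans ?_)
    exact ENNReal.rpow_le_rpow_of_exponent_le (one_le_ofReal_scale v x) (by linarith)

theorem sum_range {a : ℕ → ℝ≥0∞} (hK : 0 ≤ K) (h : ∀ v, IsModerate K v x (a v)) (v : ℕ) :
    IsModerate (K + 1) v x (∑ w ∈ Finset.range (v + 1), a w) := by
  have one_le := one_le_ofReal_scale v x
  constructor
  · calc ENNReal.ofReal (scale v x) ^ (-(K + 1)) ≤ ENNReal.ofReal (scale v x) ^ (-K) :=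
          ENNReal.rpow_le_rpow_of_exponent_le one_le (by linarith)
      _ ≤ a v := (h v).1
      _ ≤ _ := Finset.single_le_sum (fun _ _ => zero_le) (Finset.self_mem_range_succ v)
  · have succ_le : ((v + 1 : ℕ) : ℝ≥0∞) ≤ ENNReal.ofReal (scale v x) := by
      rw [← ENNReal.ofReal_natCast]
      refine ENNReal.ofReal_le_ofReal (le_trans ?_ (two_pow_le_scale v x))
      exact_mod_cast Nat.lt_two_pow_self
    calc ∑ w ∈ Finset.range (v + 1), a w
        ≤ ∑ _ ∈ Finset.range (v + 1), ENNReal.ofReal (scale v x) ^ K := by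
          refine Finset.sum_le_sum fun w hw => (h w).2.trans ?_
          gcongr
          exact scale_mono x (Nat.lt_succ_iff.1 (Finset.mem_range.1 hw))
      _ = (v + 1 : ℕ) * ENNReal.ofReal (scale v x) ^ K := by simp
      _ ≤ ENNReal.ofReal (scale v x) * ENNReal.ofReal (scale v x) ^ K := by gcongr
      _ = ENNReal.ofReal (scale v x) ^ (K + 1) := by
          rw [ENNReal.rpow_add_of_nonneg _ _ hK zero_le_one, ENNReal.rpow_one, mul_comm]

theorem rpow_le (hK : 0 ≤ K) (h : IsModerate K v x A) {s t C₀ : ℝ}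
    (hst : |s - t| * Real.log (scale v x) ≤ C₀) :
    A ^ s ≤ ENNReal.ofReal (Real.exp (K * C₀)) * A ^ t := by
  obtain ⟨r, hr, rfl⟩ : ∃ r, 0 < r ∧ ENNReal.ofReal r = A :=
    ⟨A.toReal, toReal_pos h.ne_zero (h.ne_top hK), ofReal_toReal (h.ne_top hK)⟩
  have hlog : |Real.log r| ≤ K * Real.log (scale v x) := by
    have hlow := h.1
    have hupp := h.2
    rw [ENNReal.ofReal_rpow_of_pos (scale_pos v x), ENNReal.ofReal_le_ofReal_iff hr.le] at hlow
    rw [ENNReal.ofReal_rpow_of_pos (scale_pos v x),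
      ENNReal.ofReal_le_ofReal_iff (Real.rpow_nonneg (scale_pos v x).le _)] at hupp
    have hlow' := Real.log_le_log (Real.rpow_pos_of_pos (scale_pos v x) _) hlow
    have hupp' := Real.log_le_log hr hupp
    rw [Real.log_rpow (scale_pos v x)] at hlow' hupp'
    exact abs_le.2 ⟨by linarith, hupp'⟩
  rw [ENNReal.ofReal_rpow_of_pos hr, ENNReal.ofReal_rpow_of_pos hr,
    ← ENNReal.ofReal_mul (Real.exp_pos _).le, Real.rpow_def_of_pos hr, Real.rpow_def_of_pos hr,
    ← Real.exp_add]
  refine ENNReal.ofReal_le_ofReal (Real.exp_le_exp.2 ?_)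
  have : Real.log r * (s - t) ≤ K * C₀ :=
    calc Real.log r * (s - t) ≤ |Real.log r| * |s - t| := by
          rw [← abs_mul]; exact le_abs_self _
      _ ≤ K * Real.log (scale v x) * |s - t| := by gcongr
      _ = K * (|s - t| * Real.log (scale v x)) := by ring
      _ ≤ K * C₀ := by gcongr
  linarith

end IsModerate

end Scale

section LogHolder

variable {n : ℕ} {c : ℝ} {g : En n → ℝ}

theorem one_le_log_exp_one_add {s : ℝ} (hs : 0 ≤ s) : 1 ≤ Real.log (Real.exp 1 + s) := by
  rw [Real.le_log_iff_exp_le (by positivity)]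
  linarith

theorem LocLogHolder.continuous (hg : LocLogHolder c g) : Continuous g := by
  obtain ⟨hc, hg⟩ := hg
  refine Metric.continuous_iff.2 fun x ε hε => ⟨Real.exp (-(c / ε)), Real.exp_pos _, fun y hy => ?_⟩
  rcases eq_or_ne y x with rfl | hxy
  · simpa using hε
  have hd : 0 < ‖y - x‖ := norm_pos_iff.2 (sub_ne_zero.2 hxy)
  have hlog : c / ε < Real.log (Real.exp 1 + 1 / ‖y - x‖) := by
    rw [Real.lt_log_iff_exp_lt (by positivity)]
    calc Real.exp (c / ε) = 1 / Real.exp (-(c / ε)) := by rw [Real.exp_neg, one_div, inv_inv]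
      _ < 1 / ‖y - x‖ := one_div_lt_one_div_of_lt hd (dist_eq_norm y x ▸ hy)
      _ ≤ _ := by linarith [Real.exp_pos 1]
  calc dist (g y) (g x) ≤ c / Real.log (Real.exp 1 + 1 / ‖y - x‖) := hg y x
    _ < ε := by
      rw [div_lt_iff₀ ((div_pos hc hε).trans hlog)]
      rwa [div_lt_iff₀' hε] at hlog

theorem GlobLogHolder.continuous (hg : GlobLogHolder c g) : Continuous g :=
  hg.1.continuous

theorem GlobLogHolder.exists_forall_le (hg : GlobLogHolder c g) : ∃ P, ∀ x, g x ≤ P := by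
  obtain ⟨-, gi, cd, hcd, hdec⟩ := hg
  refine ⟨gi + cd, fun x => ?_⟩
  have := div_le_self hcd.le (one_le_log_exp_one_add (norm_nonneg x))
  linarith [(abs_le.1 (hdec x)).2]

theorem abs_one_div_sub_one_div_le {a b : ℝ} (ha : 1 ≤ a) (hb : 1 ≤ b) :
    |1 / a - 1 / b| ≤ |a - b| := by
  have hab : 1 ≤ a * b := one_le_mul_of_one_le_of_one_le ha hb
  have : 1 / a - 1 / b = (b - a) / (a * b) := by field_simp
  rw [this, abs_div, abs_sub_comm, abs_of_pos (by linarith : 0 < a * b)]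
  exact div_le_self (abs_nonneg _) hab

theorem GlobLogHolder.one_div (hg : GlobLogHolder c g) (hg1 : ∀ x, 1 ≤ g x) :
    GlobLogHolder c fun x => 1 / g x := by
  obtain ⟨⟨hc, hloc⟩, gi, cd, hcd, hdec⟩ := hg
  refine ⟨⟨hc, fun x y => (abs_one_div_sub_one_div_le (hg1 x) (hg1 y)).trans (hloc x y)⟩,
    1 / max gi 1, cd, hcd, fun x => ?_⟩
  calc |1 / g x - 1 / max gi 1| ≤ |g x - max gi 1| :=
        abs_one_div_sub_one_div_le (hg1 x) (le_max_right _ _)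
    _ = |max (g x) 1 - max gi 1| := by rw [max_eq_left (hg1 x)]
    _ ≤ |g x - gi| := abs_max_sub_max_le_abs _ _ _
    _ ≤ _ := hdec x

end LogHolder

/-- A dyadic grid on `ℝ^n`: a nested sequence of countable partitions, the cells of level `v` being
the fibres of `cell v`, with volume `2^{-nv}` and diameter at most `n 2^{-v}`. -/
structure Grid (n : ℕ) where
  cell : ℕ → En n → Fin n → ℤ
  measurable_cell : ∀ v, Measurable (cell v)
  cell_eq_of_succ : ∀ v x y, cell (v + 1) x = cell (v + 1) y → cell v x = cell v y
  volume_cell : ∀ v x, volume {y | cell v y = cell v x} = ((2 : ℝ≥0∞) ^ (n * v))⁻¹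
  norm_sub_mul_le : ∀ v x y, cell v x = cell v y → ‖x - y‖ * 2 ^ v ≤ n

namespace Grid

section Average

variable {n : ℕ} (G : Grid n) {v : ℕ} {x y : En n} {f g : En n → ℝ≥0∞}

theorem cell_eq_of_le {w : ℕ} (hvw : v ≤ w) (h : G.cell w x = G.cell w y) :
    G.cell v x = G.cell v y := by
  induction w, hvw using Nat.le_induction with
  | base => exact h
  | succ w _ ih => exact ih (G.cell_eq_of_succ w x y h)

theorem measurableSet_cell (v : ℕ) (i : Fin n → ℤ) : MeasurableSet {y | G.cell v y = i} :=
  G.measurable_cell v (measurableSet_singleton i)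

theorem lintegral_eq_tsum_cell (v : ℕ) (μ : Measure (En n)) (f : En n → ℝ≥0∞) :
    ∫⁻ x, f x ∂μ = ∑' i : Fin n → ℤ, ∫⁻ x in {x | G.cell v x = i}, f x ∂μ := by
  have hdisj : Pairwise (Function.onFun Disjoint fun i => {x | G.cell v x = i}) := fun i j hij =>
    Set.disjoint_left.2 fun x hx hy => hij (hx.symm.trans hy)
  have hcover : (⋃ i, {x | G.cell v x = i}) = univ := by ext x; simp
  rw [← lintegral_iUnion (G.measurableSet_cell v) hdisj, hcover, Measure.restrict_univ]

theorem scale_le (h : G.cell v x = G.cell v y) (w : ℕ) : scale w x ≤ (n + 1) * scale w y := by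
  have hdist : ‖x - y‖ ≤ n := by
    simpa using G.norm_sub_mul_le 0 x y (G.cell_eq_of_le (Nat.zero_le v) h)
  have hx : ‖x‖ ≤ ‖x - y‖ + ‖y‖ := by simpa using norm_add_le (x - y) y
  have he : (n : ℝ) ≤ n * (Real.exp 1 + ‖y‖) :=
    le_mul_of_one_le_right n.cast_nonneg (by linarith [Real.add_one_le_exp (1 : ℝ), norm_nonneg y])
  rw [scale, scale, mul_left_comm]
  gcongr
  linarith

theorem scale_le_rpow (h : G.cell v x = G.cell v y) (w : ℕ) :
    ENNReal.ofReal (scale w x) ≤ ENNReal.ofReal (scale w y) ^ ((n : ℝ) + 1) := by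
  rw [ENNReal.ofReal_rpow_of_pos (scale_pos w y)]
  refine ENNReal.ofReal_le_ofReal ((G.scale_le h w).trans ?_)
  rw [Real.rpow_add_one (scale_pos w y).ne']
  gcongr
  · exact (scale_pos w y).le
  · calc (n : ℝ) + 1 ≤ Real.exp 1 ^ (n : ℝ) := by
          rw [Real.exp_one_rpow]; exact Real.add_one_le_exp _
      _ ≤ scale w y ^ (n : ℝ) := by gcongr; exact exp_one_le_scale w y

/-- The average of `f` over the cell of level `v` containing `x`. -/
def avg (v : ℕ) (f : En n → ℝ≥0∞) (x : En n) : ℝ≥0∞ :=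
  2 ^ (n * v) * ∫⁻ y in {y | G.cell v y = G.cell v x}, f y

theorem avg_congr (h : G.cell v x = G.cell v y) (f : En n → ℝ≥0∞) : G.avg v f x = G.avg v f y := by
  rw [avg, h, avg]

theorem measurable_avg (v : ℕ) (f : En n → ℝ≥0∞) : Measurable (G.avg v f) :=
  (measurable_of_countable fun i => 2 ^ (n * v) * ∫⁻ y in {y | G.cell v y = i}, f y).comp
    (G.measurable_cell v)

theorem avg_mono (h : ∀ y, G.cell v y = G.cell v x → f y ≤ g y) : G.avg v f x ≤ G.avg v g x := by
  unfold avg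
  gcongr 1
  exact setLIntegral_mono' (G.measurableSet_cell v _) h

theorem avg_mono_ae (h : ∀ᵐ y, f y ≤ g y) : G.avg v f x ≤ G.avg v g x := by
  unfold avg
  gcongr 1
  exact lintegral_mono_ae (ae_restrict_of_ae h)

theorem avg_const (v : ℕ) (x : En n) (a : ℝ≥0∞) : G.avg v (fun _ => a) x = a := by
  rw [avg, setLIntegral_const, G.volume_cell, mul_left_comm,
    ENNReal.mul_inv_cancel (pow_ne_zero _ two_ne_zero) (ENNReal.pow_ne_top ofNat_ne_top), mul_one]

theorem avg_le (h : ∀ y, G.cell v y = G.cell v x → f y ≤ f x) : G.avg v f x ≤ f x :=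
  (G.avg_mono h).trans_eq (G.avg_const v x (f x))

theorem le_avg {a : ℝ≥0∞} (h : ∀ y, G.cell v y = G.cell v x → a ≤ f y) : a ≤ G.avg v f x :=
  (G.avg_const v x a).symm.trans_le (G.avg_mono h)

theorem avg_const_add (a : ℝ≥0∞) (g : En n → ℝ≥0∞) :
    G.avg v (fun y => a + g y) x = a + G.avg v g x := by
  conv_rhs => rw [← G.avg_const v x a]
  rw [avg, lintegral_add_left measurable_const, mul_add, avg, avg]

theorem avg_const_mul (hf : Measurable f) (a : ℝ≥0∞) :
    G.avg v (fun y => a * f y) x = a * G.avg v f x := by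
  rw [avg, lintegral_const_mul _ hf, mul_left_comm, avg]

/-- The cell of level `0` and index `i`; it may be empty. -/
def unitCell (i : Fin n → ℤ) : Set (En n) :=
  {x | G.cell 0 x = i}

theorem volume_unitCell_le (i : Fin n → ℤ) : volume (G.unitCell i) ≤ 1 := by
  rcases (G.unitCell i).eq_empty_or_nonempty with h | ⟨x, rfl⟩
  · simp [h]
  · exact (G.volume_cell 0 x).trans_le (by simp)

theorem avg_le_lintegral_unitCell (v : ℕ) (f : En n → ℝ≥0∞) {i : Fin n → ℤ}
    (hx : x ∈ G.unitCell i) :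
    G.avg v f x ≤ 2 ^ (n * v) * ∫⁻ y in G.unitCell i, f y := by
  unfold avg
  gcongr 1
  exact lintegral_mono_set fun y hy => (G.cell_eq_of_le v.zero_le hy).trans hx

theorem setLIntegral_unitCell_mul_avg (v : ℕ) (i : Fin n → ℤ) (f : En n → ℝ≥0∞)
    (hg : Measurable g) :
    ∫⁻ x in G.unitCell i, g x * G.avg v f x =
      ∑' j, 2 ^ (n * v) * ((∫⁻ x in {x | G.cell v x = j} ∩ G.unitCell i, f x) *
        ∫⁻ x in {x | G.cell v x = j} ∩ G.unitCell i, g x) := by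
  rw [G.lintegral_eq_tsum_cell v]
  refine tsum_congr fun j => ?_
  rw [Measure.restrict_restrict (G.measurableSet_cell v j), ← mul_assoc,
    ← lintegral_const_mul _ hg]
  refine setLIntegral_congr_fun
    ((G.measurableSet_cell v j).inter (G.measurableSet_cell 0 i)) ?_
  rintro x ⟨rfl, hx⟩
  have hsub : {y | G.cell v y = G.cell v x} ⊆ G.unitCell i := fun y hy =>
    (G.cell_eq_of_le v.zero_le hy).trans hx
  simp only [avg, inter_eq_left.2 hsub, mul_comm]

theorem setLIntegral_mul_avg_comm (v : ℕ) (i : Fin n → ℤ) (hf : Measurable f) (hg : Measurable g) :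
    ∫⁻ x in G.unitCell i, g x * G.avg v f x = ∫⁻ x in G.unitCell i, f x * G.avg v g x := by
  rw [G.setLIntegral_unitCell_mul_avg v i f hg, G.setLIntegral_unitCell_mul_avg v i g hf]
  simp only [mul_comm]

end Average

section LogHolder

variable {n : ℕ} (G : Grid n) {C₀ : ℝ} {p : En n → ℝ}

/-- Log-Hölder continuity, local and at infinity, along the cells of a grid. -/
def IsLogHolder (C₀ : ℝ) (p : En n → ℝ) : Prop :=
  ∀ v x y, G.cell v x = G.cell v y → |p x - p y| * Real.log (scale v x) ≤ C₀

variable {G} in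
theorem IsLogHolder.nonneg (h : G.IsLogHolder C₀ p) : 0 ≤ C₀ := by
  simpa using h 0 0 0 rfl

theorem abs_sub_mul_log_two_pow_le {c : ℝ} {g : En n → ℝ} (hg : LocLogHolder c g) {v : ℕ}
    {x y : En n} (hxy : G.cell v x = G.cell v y) :
    |g x - g y| * Real.log (2 ^ v) ≤ c * (Real.log (n + 1) + 1) := by
  have hc := hg.1
  have hL : 0 ≤ Real.log ((n : ℝ) + 1) := Real.log_nonneg (by simp)
  rcases eq_or_ne x y with rfl | hne
  · simp only [sub_self, abs_zero, zero_mul]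
    positivity
  have hd : 0 < ‖x - y‖ := norm_pos_iff.2 (sub_ne_zero.2 hne)
  set W := Real.log (Real.exp 1 + 1 / ‖x - y‖)
  have hW : 1 ≤ W := one_le_log_exp_one_add (by positivity)
  have hlog : Real.log (2 ^ v) ≤ (Real.log (n + 1) + 1) * W := by
    have hpow : (2 : ℝ) ^ v ≤ (n + 1) * (Real.exp 1 + 1 / ‖x - y‖) :=
      calc (2 : ℝ) ^ v ≤ n * (1 / ‖x - y‖) := by
            rw [mul_one_div, le_div_iff₀ hd, mul_comm]
            exact G.norm_sub_mul_le v x y hxy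
        _ ≤ (n + 1) * (Real.exp 1 + 1 / ‖x - y‖) := by
            gcongr
            · linarith
            · linarith [Real.exp_pos 1]
    calc Real.log (2 ^ v) ≤ Real.log (n + 1) + W := by
          rw [← Real.log_mul (by positivity) (by positivity)]
          exact Real.log_le_log (by positivity) hpow
      _ ≤ Real.log (n + 1) * W + W := by gcongr; exact le_mul_of_one_le_right hL hW
      _ = (Real.log (n + 1) + 1) * W := by ring
  calc |g x - g y| * Real.log (2 ^ v) ≤ c / W * ((Real.log (n + 1) + 1) * W) :=
        mul_le_mul (hg.2 x y) hlog (Real.log_nonneg (one_le_pow₀ one_le_two)) (by positivity)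
    _ = c * (Real.log (n + 1) + 1) := by field_simp

theorem abs_sub_mul_log_scale_zero_le {gi cd : ℝ} {g : En n → ℝ} (hcd : 0 ≤ cd)
    (hg : ∀ x, |g x - gi| ≤ cd / Real.log (Real.exp 1 + ‖x‖)) {v : ℕ} {x y : En n}
    (hxy : G.cell v x = G.cell v y) :
    |g x - g y| * Real.log (scale 0 x) ≤ cd * (Real.log (n + 1) + 2) := by
  have hL : 0 ≤ Real.log ((n : ℝ) + 1) := Real.log_nonneg (by simp)
  have hlog : ∀ z : En n, Real.log (scale 0 z) = Real.log (Real.exp 1 + ‖z‖) := by simp [scale]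
  have hX : 1 ≤ Real.log (scale 0 x) := hlog x ▸ one_le_log_exp_one_add (norm_nonneg x)
  have hY : 1 ≤ Real.log (scale 0 y) := hlog y ▸ one_le_log_exp_one_add (norm_nonneg y)
  have hXY : Real.log (scale 0 x) ≤ (Real.log (n + 1) + 1) * Real.log (scale 0 y) := by
    have := Real.log_le_log (scale_pos 0 x) (G.scale_le hxy 0)
    rw [Real.log_mul (by positivity) (scale_pos 0 y).ne'] at this
    nlinarith
  simp only [← hlog] at hg
  set X := Real.log (scale 0 x)
  set Y := Real.log (scale 0 y)
  calc |g x - g y| * X ≤ (|g x - gi| + |g y - gi|) * X := by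
        gcongr
        rw [abs_sub_comm (g y)]
        exact abs_sub_le _ _ _
    _ ≤ cd / X * X + cd / Y * ((Real.log (n + 1) + 1) * Y) := by
        rw [add_mul]
        gcongr
        exacts [hg x, hg y]
    _ = cd * (Real.log (n + 1) + 2) := by field_simp; ring

theorem exists_isLogHolder {c : ℝ} (hp : GlobLogHolder c p) : ∃ C₀, G.IsLogHolder C₀ p := by
  obtain ⟨hloc, gi, cd, hcd, hdec⟩ := hp
  refine ⟨c * (Real.log (n + 1) + 1) + cd * (Real.log (n + 1) + 2), fun v x y hxy => ?_⟩
  rw [scale_eq_two_pow_mul, Real.log_mul (by positivity) (scale_pos 0 x).ne', mul_add]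
  exact add_le_add (G.abs_sub_mul_log_two_pow_le hloc hxy)
    (G.abs_sub_mul_log_scale_zero_le hcd.le hdec hxy)

end LogHolder

end Grid

theorem lintegral_iSup_rpow_le {α : Type*} [MeasurableSpace α] {μ : Measure α} {p : α → ℝ}
    {F : ℕ → α → ℝ≥0∞} {C : ℝ≥0∞} (hp : Measurable p) (hp0 : ∀ x, 0 < p x)
    (hF : ∀ N, Measurable (F N)) (hmono : Monotone F) (h : ∀ N, ∫⁻ x, F N x ^ p x ∂μ ≤ C) :
    ∫⁻ x, (⨆ N, F N x) ^ p x ∂μ ≤ C := by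
  have hsup : ∀ x, (⨆ N, F N x) ^ p x = ⨆ N, F N x ^ p x := fun x =>
    (ENNReal.orderIsoRpow (p x) (hp0 x)).map_iSup fun N => F N x
  simp only [hsup]
  rw [lintegral_iSup (fun N => (hF N).pow hp) fun M N hMN x =>
    ENNReal.rpow_le_rpow (hmono hMN x) (hp0 x).le]
  exact iSup_le h

namespace Grid

section DualDoob

variable {n : ℕ} (G : Grid n) {v N : ℕ} {x : En n} {C₀ K P : ℝ} {p : En n → ℝ}
  {a : ℕ → En n → ℝ≥0∞}

theorem lintegral_le_of_unitCell {f g : En n → ℝ≥0∞} {C : ℝ≥0∞} (hg : Measurable g)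
    (h : ∀ i, ∫⁻ x in G.unitCell i, f x ≤ C * ∫⁻ x in G.unitCell i, g x) :
    ∫⁻ x, f x ≤ C * ∫⁻ x, g x := by
  rw [← lintegral_const_mul C hg, G.lintegral_eq_tsum_cell 0, G.lintegral_eq_tsum_cell 0]
  exact ENNReal.tsum_le_tsum fun i => (h i).trans_eq (lintegral_const_mul C hg).symm

theorem avg_rpow_sub_one_le (hp : G.IsLogHolder C₀ p) (hK : 0 ≤ K) {A : En n → ℝ≥0∞}
    (hA : ∀ y, G.cell v y = G.cell v x → A y = A x) (hmod : IsModerate K v x (A x)) :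
    G.avg v (fun y => A y ^ (p y - 1)) x ≤
      ENNReal.ofReal (Real.exp (K * C₀)) * A x ^ (p x - 1) := by
  refine (G.avg_mono fun y hy => ?_).trans_eq (G.avg_const v x _)
  rw [hA y hy]
  refine hmod.rpow_le hK ?_
  rw [sub_sub_sub_cancel_right, abs_sub_comm]
  exact hp v x y hy.symm

theorem setLIntegral_rpow_mul_avg_le (hpm : Measurable p) (hp : G.IsLogHolder C₀ p) (hK : 0 ≤ K)
    {F f : En n → ℝ≥0∞} (hF : Measurable F) (hFv : ∀ x y, G.cell v x = G.cell v y → F x = F y)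
    (hmod : ∀ x, IsModerate K v x (F x)) (hf : Measurable f) (i : Fin n → ℤ) :
    ∫⁻ x in G.unitCell i, F x ^ (p x - 1) * G.avg v f x ≤
      ENNReal.ofReal (Real.exp (K * C₀)) * ∫⁻ x in G.unitCell i, F x ^ (p x - 1) * f x := by
  have hFp : Measurable fun x => F x ^ (p x - 1) := hF.pow (hpm.sub_const 1)
  rw [G.setLIntegral_mul_avg_comm v i hf hFp, ← lintegral_const_mul _ (hFp.fun_mul hf)]
  refine lintegral_mono fun x => ?_
  rw [mul_comm (f x), ← mul_assoc]
  gcongr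
  exact G.avg_rpow_sub_one_le hp hK (fun y hy => hFv y x hy) (hmod x)

/-- The sum of the averages `avg w (a w)` over the levels `w < N`. -/
def avgSum (a : ℕ → En n → ℝ≥0∞) (N : ℕ) (x : En n) : ℝ≥0∞ :=
  ∑ w ∈ Finset.range N, G.avg w (a w) x

theorem avgSum_succ (a : ℕ → En n → ℝ≥0∞) (N : ℕ) (x : En n) :
    G.avgSum a (N + 1) x = G.avgSum a N x + G.avg N (a N) x :=
  Finset.sum_range_succ _ N

theorem avgSum_le_succ (a : ℕ → En n → ℝ≥0∞) (N : ℕ) (x : En n) :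
    G.avgSum a N x ≤ G.avgSum a (N + 1) x :=
  (G.avgSum_succ a N x).symm ▸ le_self_add

theorem avgSum_congr {y : En n} (h : G.cell v x = G.cell v y) (a : ℕ → En n → ℝ≥0∞) :
    G.avgSum a (v + 1) x = G.avgSum a (v + 1) y :=
  Finset.sum_congr rfl fun _ hw =>
    G.avg_congr (G.cell_eq_of_le (Nat.lt_succ_iff.1 (Finset.mem_range.1 hw)) h) _

theorem measurable_avgSum (a : ℕ → En n → ℝ≥0∞) (N : ℕ) : Measurable (G.avgSum a N) :=
  Finset.measurable_fun_sum _ fun w _ => G.measurable_avg w (a w)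

theorem setLIntegral_avgSum_rpow_le (hpm : Measurable p) (hp : G.IsLogHolder C₀ p)
    (hp1 : ∀ x, 1 ≤ p x) (hP : ∀ x, p x ≤ P) (hK : 0 ≤ K) (ha : ∀ v, Measurable (a v))
    (hmod : ∀ v x, IsModerate K v x (G.avgSum a (v + 1) x)) (i : Fin n → ℤ) (N : ℕ) :
    ∫⁻ x in G.unitCell i, G.avgSum a N x ^ p x ≤
      ENNReal.ofReal P * ENNReal.ofReal (Real.exp (K * C₀)) *
        ∫⁻ x in G.unitCell i, G.avgSum a N x ^ (p x - 1) * ∑ w ∈ Finset.range N, a w x := by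
  set E := ENNReal.ofReal (Real.exp (K * C₀))
  have hp0 : ∀ x, 0 < p x := fun x => zero_lt_one.trans_le (hp1 x)
  induction N with
  | zero => simp [avgSum, ENNReal.zero_rpow_of_pos (hp0 _)]
  | succ N ih =>
    set F := G.avgSum a (N + 1)
    have hF : Measurable fun x => F x ^ (p x - 1) := (G.measurable_avgSum a _).pow (hpm.sub_const 1)
    have step : ∀ x, F x ^ p x ≤
        G.avgSum a N x ^ p x + ENNReal.ofReal P * (F x ^ (p x - 1) * G.avg N (a N) x) := fun x => by
      rw [← mul_assoc, show F x = _ from G.avgSum_succ a N x]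
      refine (add_rpow_le_rpow_add_mul _ _ (hp1 x)).trans ?_
      gcongr
      exact hP x
    calc ∫⁻ x in G.unitCell i, F x ^ p x
        ≤ ∫⁻ x in G.unitCell i, G.avgSum a N x ^ p x +
          ENNReal.ofReal P * (F x ^ (p x - 1) * G.avg N (a N) x) := lintegral_mono step
      _ = (∫⁻ x in G.unitCell i, G.avgSum a N x ^ p x) +
          ENNReal.ofReal P * ∫⁻ x in G.unitCell i, F x ^ (p x - 1) * G.avg N (a N) x := by
        rw [lintegral_add_left ((G.measurable_avgSum a N).pow hpm),
          lintegral_const_mul _ (hF.fun_mul (G.measurable_avg N _))]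
      _ ≤ ENNReal.ofReal P * E *
            (∫⁻ x in G.unitCell i, F x ^ (p x - 1) * ∑ w ∈ Finset.range N, a w x) +
          ENNReal.ofReal P * (E * ∫⁻ x in G.unitCell i, F x ^ (p x - 1) * a N x) := by
        gcongr ?_ + _ * ?_
        · refine ih.trans ?_
          gcongr with x
          exacts [sub_nonneg.2 (hp1 x), G.avgSum_le_succ a N x]
        · exact G.setLIntegral_rpow_mul_avg_le hpm hp hK (G.measurable_avgSum a _)
            (fun x y hxy => G.avgSum_congr hxy a) (hmod N) (ha N) i
      _ = ENNReal.ofReal P * E *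
          ∫⁻ x in G.unitCell i, F x ^ (p x - 1) * ∑ w ∈ Finset.range (N + 1), a w x := by
        simp only [Finset.sum_range_succ, mul_add]
        rw [lintegral_add_right _ (hF.fun_mul (ha N)), mul_add, mul_assoc]
        ring

theorem setLIntegral_avgSum_rpow_ne_top (hp0 : ∀ x, 0 ≤ p x) (hP : ∀ x, p x ≤ P) (hK : 0 ≤ K)
    (hmod : ∀ v x, IsModerate K v x (G.avgSum a (v + 1) x)) (i : Fin n → ℤ) (N : ℕ) :
    ∫⁻ x in G.unitCell i, G.avgSum a N x ^ p x ≠ ∞ := by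
  rcases (G.unitCell i).eq_empty_or_nonempty with h | ⟨z, hz⟩
  · simp [h]
  set B := ((ENNReal.ofReal (scale N z) ^ ((n : ℝ) + 1)) ^ K) ^ P
  have hP0 : 0 ≤ P := (hp0 0).trans (hP 0)
  have hB : B ≠ ∞ := by
    simp only [B]
    finiteness
  have bound : ∀ x ∈ G.unitCell i, G.avgSum a N x ^ p x ≤ B := fun x hx =>
    calc G.avgSum a N x ^ p x ≤ (ENNReal.ofReal (scale N x) ^ K) ^ p x :=
          ENNReal.rpow_le_rpow ((G.avgSum_le_succ a N x).trans (hmod N x).2) (hp0 x)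
      _ ≤ (ENNReal.ofReal (scale N x) ^ K) ^ P :=
          ENNReal.rpow_le_rpow_of_exponent_le
            (ENNReal.one_rpow K ▸ ENNReal.rpow_le_rpow (one_le_ofReal_scale N x) hK) (hP x)
      _ ≤ B := by
          simp only [B]
          gcongr
          exact G.scale_le_rpow (hx.trans hz.symm) N
  refine ne_top_of_le_ne_top hB ?_
  calc ∫⁻ x in G.unitCell i, G.avgSum a N x ^ p x ≤ ∫⁻ _ in G.unitCell i, B :=
        setLIntegral_mono' (G.measurableSet_cell 0 i) bound
    _ ≤ B * 1 := by rw [setLIntegral_const]; gcongr; exact G.volume_unitCell_le i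
    _ = B := mul_one B

theorem lintegral_avgSum_rpow_le (hpm : Measurable p) (hp : G.IsLogHolder C₀ p)
    (hp1 : ∀ x, 1 ≤ p x) (hP : ∀ x, p x ≤ P) (hK : 0 ≤ K) (ha : ∀ v, Measurable (a v))
    (hmod : ∀ v x, IsModerate K v x (G.avgSum a (v + 1) x)) (N : ℕ) :
    ∫⁻ x, G.avgSum a N x ^ p x ≤
      2 * (2 * (ENNReal.ofReal P * ENNReal.ofReal (Real.exp (K * C₀)))) ^ P *
        ∫⁻ x, (∑ w ∈ Finset.range N, a w x) ^ p x := by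
  set D := ENNReal.ofReal P * ENNReal.ofReal (Real.exp (K * C₀))
  have hp0 : ∀ x, 0 ≤ p x := fun x => zero_le_one.trans (hp1 x)
  have hD : 1 ≤ 2 * D := by
    refine one_le_two.trans (le_mul_of_one_le_right' (one_le_mul ?_ ?_))
    · exact ENNReal.one_le_ofReal.2 ((hp1 0).trans (hP 0))
    · exact ENNReal.one_le_ofReal.2 (Real.one_le_exp (mul_nonneg hK hp.nonneg))
  have hS : Measurable fun x => (∑ w ∈ Finset.range N, a w x) ^ p x :=
    (Finset.measurable_fun_sum _ fun w _ => ha w).pow hpm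
  refine G.lintegral_le_of_unitCell hS fun i => ?_
  rw [mul_assoc]
  refine le_two_mul_of_le_half_add
    (G.setLIntegral_avgSum_rpow_ne_top hp0 hP hK hmod i N) ?_
  calc ∫⁻ x in G.unitCell i, G.avgSum a N x ^ p x
      ≤ D * ∫⁻ x in G.unitCell i, G.avgSum a N x ^ (p x - 1) * ∑ w ∈ Finset.range N, a w x :=
        G.setLIntegral_avgSum_rpow_le hpm hp hp1 hP hK ha hmod i N
    _ = ∫⁻ x in G.unitCell i, D * (G.avgSum a N x ^ (p x - 1) * ∑ w ∈ Finset.range N, a w x) :=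
        (lintegral_const_mul _ (((G.measurable_avgSum a N).pow (hpm.sub_const 1)).mul
          (Finset.measurable_fun_sum _ fun w _ => ha w))).symm
    _ ≤ ∫⁻ x in G.unitCell i, G.avgSum a N x ^ p x / 2 +
          (2 * D) ^ P * (∑ w ∈ Finset.range N, a w x) ^ p x := by
        refine lintegral_mono fun x => (mul_rpow_sub_one_mul_le _ _ _ (hp1 x)).trans ?_
        gcongr
        exact hP x
    _ = _ := by
        simp only [div_eq_mul_inv]
        rw [lintegral_add_right _ (hS.const_mul _), lintegral_const_mul _ hS,
          lintegral_mul_const _ ((G.measurable_avgSum a N).pow hpm)]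

theorem lintegral_tsum_avg_rpow_le (hpm : Measurable p) (hp : G.IsLogHolder C₀ p)
    (hp1 : ∀ x, 1 ≤ p x) (hP : ∀ x, p x ≤ P) (hK : 0 ≤ K) (ha : ∀ v, Measurable (a v))
    (hmod : ∀ v x, IsModerate K v x (G.avgSum a (v + 1) x)) :
    ∫⁻ x, (∑' v, G.avg v (a v) x) ^ p x ≤
      2 * (2 * (ENNReal.ofReal P * ENNReal.ofReal (Real.exp (K * C₀)))) ^ P *
        ∫⁻ x, (∑' v, a v x) ^ p x := by
  have hp0 : ∀ x, 0 < p x := fun x => zero_lt_one.trans_le (hp1 x)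
  simp only [ENNReal.tsum_eq_iSup_nat (f := fun v => G.avg v (a v) _)]
  refine lintegral_iSup_rpow_le hpm hp0 (G.measurable_avgSum a)
    (monotone_nat_of_le_succ fun N => G.avgSum_le_succ a N) fun N => ?_
  refine (G.lintegral_avgSum_rpow_le hpm hp hp1 hP hK ha hmod N).trans ?_
  gcongr with x
  exacts [(hp0 x).le, ENNReal.sum_le_tsum _]

end DualDoob

end Grid

theorem max_rpow_le_rpow_add_mul {a : ℝ} (ha : 1 < a) (m X : ℝ≥0∞) :
    max m X ^ a ≤
      m ^ a + ENNReal.ofReal (a / (a - 1)) * ((max m X ^ (a - 1) - m ^ (a - 1)) * X) := by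
  rcases le_total X m with h | h
  · simp [max_eq_left h]
  rw [max_eq_right h]
  have ha0 : 0 < a - 1 := sub_pos.2 ha
  set r := a / (a - 1)
  have hr : 1 ≤ r := (one_le_div ha0).2 (by linarith)
  have hmul : (a - 1) * r = a := by simp only [r]; field_simp
  have hmul' : (a - 1) * (r - 1) = 1 := by rw [mul_sub, hmul]; ring
  have hle : m ^ (a - 1) ≤ X ^ (a - 1) := by gcongr
  have key := add_rpow_le_rpow_add_mul (m ^ (a - 1)) (X ^ (a - 1) - m ^ (a - 1)) hr
  rw [add_tsub_cancel_of_le hle, ← ENNReal.rpow_mul, ← ENNReal.rpow_mul, ← ENNReal.rpow_mul, hmul,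
    hmul', ENNReal.rpow_one] at key
  rwa [mul_comm _ X, ← mul_assoc]

namespace Grid

section Maximal

variable {n : ℕ} (G : Grid n) {v : ℕ} {x : En n} {a : ℝ} {f g : En n → ℝ≥0∞}

/-- The dyadic maximal function over the levels `w < N`, equal to `0` for `N = 0`. -/
def maxAvg (f : En n → ℝ≥0∞) (N : ℕ) (x : En n) : ℝ≥0∞ :=
  (Finset.range N).sup fun w => G.avg w f x

theorem maxAvg_succ (f : En n → ℝ≥0∞) (N : ℕ) (x : En n) :
    G.maxAvg f (N + 1) x = max (G.maxAvg f N x) (G.avg N f x) := by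
  rw [maxAvg, Finset.range_add_one, Finset.sup_insert, sup_comm, maxAvg]

theorem monotone_maxAvg (f : En n → ℝ≥0∞) : Monotone (G.maxAvg f) := fun _ _ hMN _ =>
  Finset.sup_mono (Finset.range_mono hMN)

theorem maxAvg_congr {y : En n} {N : ℕ} (h : G.cell v x = G.cell v y) (hN : N ≤ v + 1)
    (f : En n → ℝ≥0∞) : G.maxAvg f N x = G.maxAvg f N y :=
  Finset.sup_congr rfl fun w hw =>
    G.avg_congr (G.cell_eq_of_le (by have := Finset.mem_range.1 hw; omega) h) f

theorem measurable_maxAvg (f : En n → ℝ≥0∞) (N : ℕ) : Measurable (G.maxAvg f N) := by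
  induction N with
  | zero => exact measurable_const
  | succ N ih =>
    simp only [funext (G.maxAvg_succ f N)]
    exact ih.max (G.measurable_avg N f)

theorem iSup_avg_eq_iSup_maxAvg (f : En n → ℝ≥0∞) (x : En n) :
    ⨆ v, G.avg v f x = ⨆ N, G.maxAvg f N x := by
  refine le_antisymm (iSup_le fun v => ?_) (iSup_le fun N => Finset.sup_le fun w _ => ?_)
  · exact le_iSup_of_le (v + 1) (Finset.le_sup (f := fun w => G.avg w f x)
      (Finset.self_mem_range_succ v))
  · exact le_iSup (fun w => G.avg w f x) w

theorem setLIntegral_maxAvg_rpow_le (ha : 1 < a) (hf : Measurable f) (i : Fin n → ℤ) (N : ℕ) :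
    ∫⁻ x in G.unitCell i, G.maxAvg f N x ^ a ≤
      ENNReal.ofReal (a / (a - 1)) *
        ∫⁻ x in G.unitCell i, G.maxAvg f N x ^ (a - 1) * f x := by
  set r := ENNReal.ofReal (a / (a - 1))
  induction N with
  | zero => simp [maxAvg, ENNReal.zero_rpow_of_pos (zero_lt_one.trans ha)]
  | succ N ih =>
    set M := G.maxAvg f N
    set M' := G.maxAvg f (N + 1)
    set Δ : En n → ℝ≥0∞ := fun x => M' x ^ (a - 1) - M x ^ (a - 1)
    have hM : Measurable M := G.measurable_maxAvg f N
    have hM' : Measurable M' := G.measurable_maxAvg f (N + 1)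
    have hΔ : Measurable Δ := (hM'.pow_const _).sub (hM.pow_const _)
    have hsum : ∀ x, M x ^ (a - 1) + Δ x = M' x ^ (a - 1) := fun x =>
      add_tsub_cancel_of_le <|
        ENNReal.rpow_le_rpow (G.monotone_maxAvg f N.le_succ x) (sub_nonneg.2 ha.le)
    have avg_Δ : ∀ x, G.avg N Δ x ≤ Δ x := fun x => G.avg_le fun y hy => by
      simp only [Δ, M, M', G.maxAvg_congr hy N.le_succ f, G.maxAvg_congr hy le_rfl f, le_refl]
    calc ∫⁻ x in G.unitCell i, M' x ^ a
        ≤ ∫⁻ x in G.unitCell i, M x ^ a + r * (Δ x * G.avg N f x) := by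
          refine lintegral_mono fun x => ?_
          simp only [Δ, M', G.maxAvg_succ f N x]
          exact max_rpow_le_rpow_add_mul ha _ _
      _ = (∫⁻ x in G.unitCell i, M x ^ a) + r * ∫⁻ x in G.unitCell i, f x * G.avg N Δ x := by
          rw [lintegral_add_left (hM.pow_const a),
            lintegral_const_mul _ (hΔ.fun_mul (G.measurable_avg N f)),
            G.setLIntegral_mul_avg_comm N i hf hΔ]
      _ ≤ r * (∫⁻ x in G.unitCell i, M x ^ (a - 1) * f x) +
            r * ∫⁻ x in G.unitCell i, f x * Δ x := by
          gcongr with x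
          exact avg_Δ x
      _ = r * ∫⁻ x in G.unitCell i, M' x ^ (a - 1) * f x := by
          rw [← mul_add, ← lintegral_add_left ((hM.pow_const _).fun_mul hf)]
          simp only [← hsum, add_mul, mul_comm (f _)]

theorem setLIntegral_maxAvg_rpow_ne_top (ha : 1 ≤ a) (i : Fin n → ℤ) (N : ℕ)
    (hf : ∫⁻ x in G.unitCell i, f x ^ a ≠ ∞) :
    ∫⁻ x in G.unitCell i, G.maxAvg f N x ^ a ≠ ∞ := by
  have hI : ∫⁻ x in G.unitCell i, f x ≠ ∞ := by
    refine ne_top_of_le_ne_top (b := 1 + ∫⁻ x in G.unitCell i, f x ^ a) (by finiteness) ?_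
    calc ∫⁻ x in G.unitCell i, f x ≤ ∫⁻ x in G.unitCell i, 1 + f x ^ a :=
          lintegral_mono fun x => by
            simpa using le_add_rpow_mul_rpow one_ne_zero ENNReal.one_ne_top (f x) ha
      _ ≤ 1 + ∫⁻ x in G.unitCell i, f x ^ a := by
          rw [lintegral_add_left measurable_const, setLIntegral_const, one_mul]
          gcongr
          exact G.volume_unitCell_le i
  set B := (2 ^ (n * N) * ∫⁻ x in G.unitCell i, f x) ^ a
  have bound : ∀ x ∈ G.unitCell i, G.maxAvg f N x ^ a ≤ B := fun x hx => by
    refine ENNReal.rpow_le_rpow (Finset.sup_le fun w hw => ?_) (zero_le_one.trans ha)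
    refine (G.avg_le_lintegral_unitCell w f hx).trans ?_
    gcongr
    exacts [one_le_two, (Finset.mem_range.1 hw).le]
  have hB : B ≠ ∞ :=
    ENNReal.rpow_ne_top_of_nonneg (zero_le_one.trans ha) (ENNReal.mul_ne_top (by finiteness) hI)
  refine ne_top_of_le_ne_top hB ?_
  calc ∫⁻ x in G.unitCell i, G.maxAvg f N x ^ a ≤ ∫⁻ _ in G.unitCell i, B :=
        setLIntegral_mono' (G.measurableSet_cell 0 i) bound
    _ ≤ B * 1 := by rw [setLIntegral_const]; gcongr; exact G.volume_unitCell_le i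
    _ = B := mul_one B

theorem lintegral_maxAvg_rpow_le (ha : 1 < a) (hf : Measurable f) (N : ℕ) :
    ∫⁻ x, G.maxAvg f N x ^ a ≤
      2 * (2 * ENNReal.ofReal (a / (a - 1))) ^ a * ∫⁻ x, f x ^ a := by
  set r := ENNReal.ofReal (a / (a - 1))
  have hr : r ≠ 0 := (ENNReal.ofReal_pos.2 (div_pos (by linarith) (by linarith))).ne'
  have hfa : Measurable fun x => f x ^ a := hf.pow_const a
  refine G.lintegral_le_of_unitCell hfa fun i => ?_
  rcases eq_or_ne (∫⁻ x in G.unitCell i, f x ^ a) ∞ with htop | hfin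
  · have : 2 * (2 * r) ^ a ≠ 0 := by
      simp [ENNReal.rpow_eq_zero_iff, hr, r, (zero_lt_one.trans ha).not_gt,
        ENNReal.mul_eq_top]
    rw [htop, ENNReal.mul_top this]
    exact le_top
  rw [mul_assoc]
  refine le_two_mul_of_le_half_add (G.setLIntegral_maxAvg_rpow_ne_top ha.le i N hfin) ?_
  calc ∫⁻ x in G.unitCell i, G.maxAvg f N x ^ a
      ≤ r * ∫⁻ x in G.unitCell i, G.maxAvg f N x ^ (a - 1) * f x :=
        G.setLIntegral_maxAvg_rpow_le ha hf i N
    _ = ∫⁻ x in G.unitCell i, r * (G.maxAvg f N x ^ (a - 1) * f x) :=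
        (lintegral_const_mul _ (((G.measurable_maxAvg f N).pow_const _).fun_mul hf)).symm
    _ ≤ ∫⁻ x in G.unitCell i, G.maxAvg f N x ^ a / 2 + (2 * r) ^ a * f x ^ a :=
        lintegral_mono fun x => mul_rpow_sub_one_mul_le _ _ _ ha.le
    _ = _ := by
        simp only [div_eq_mul_inv]
        rw [lintegral_add_right _ (hfa.const_mul _), lintegral_const_mul _ hfa,
          lintegral_mul_const _ ((G.measurable_maxAvg f N).pow_const a)]

theorem lintegral_iSup_avg_rpow_le (ha : 1 < a) (hf : Measurable f) :
    ∫⁻ x, (⨆ v, G.avg v f x) ^ a ≤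
      2 * (2 * ENNReal.ofReal (a / (a - 1))) ^ a * ∫⁻ x, f x ^ a := by
  simp only [G.iSup_avg_eq_iSup_maxAvg]
  exact lintegral_iSup_rpow_le measurable_const (fun _ => zero_lt_one.trans ha)
    (G.measurable_maxAvg f) (G.monotone_maxAvg f) fun N => G.lintegral_maxAvg_rpow_le ha hf N

variable {C₀ K P : ℝ} {p t : En n → ℝ}

variable {G} in
theorem IsLogHolder.div_const (hp : G.IsLogHolder C₀ p) (ha : 1 ≤ a) :
    G.IsLogHolder C₀ fun x => p x / a := fun v x y hxy => by
  rw [← sub_div, abs_div, abs_of_nonneg (zero_le_one.trans ha)]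
  refine le_trans ?_ (hp v x y hxy)
  gcongr
  exacts [log_scale_nonneg v x, div_le_self (abs_nonneg _) ha]

theorem avg_rpow_le (ht : G.IsLogHolder C₀ t) (htm : Measurable t) (ht1 : ∀ x, 1 ≤ t x)
    (hK : 0 ≤ K) (hg : Measurable g) (hmod : IsModerate K v x (G.avg v g x)) :
    G.avg v g x ^ t x ≤
      2 ^ t x * ENNReal.ofReal (Real.exp ((K + 1) * C₀)) * G.avg v (fun y => g y ^ t y) x := by
  set A := G.avg v g x
  set E := ENNReal.ofReal (Real.exp ((K + 1) * C₀))
  set B := G.avg v (fun y => g y ^ t y) x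
  have hhalf := hmod.half
  have hgt : Measurable fun y => g y ^ t y := hg.pow htm
  have pointwise : ∀ y, G.cell v y = G.cell v x →
      g y ≤ A / 2 + E * (A / 2) ^ (1 - t x) * g y ^ t y := fun y hy => by
    refine (le_add_rpow_mul_rpow hhalf.ne_zero (hhalf.ne_top (by linarith)) (g y) (ht1 y)).trans ?_
    gcongr
    refine hhalf.rpow_le (by linarith) ?_
    rw [show 1 - t y - (1 - t x) = t x - t y by ring]
    exact ht v x y hy.symm
  have half_le : A / 2 ≤ E * (A / 2) ^ (1 - t x) * B := by
    have hA : A ≤ A / 2 + E * (A / 2) ^ (1 - t x) * B :=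
      (G.avg_mono pointwise).trans_eq (by rw [G.avg_const_add, G.avg_const_mul hgt])
    refine (ENNReal.add_le_add_iff_left (hhalf.ne_top (by linarith))).1 ?_
    rwa [ENNReal.add_halves]
  calc A ^ t x = 2 ^ t x * ((A / 2) ^ (t x - 1) * (A / 2)) := by
        rw [rpow_sub_one_mul_self _ (ht1 x), ← ENNReal.mul_rpow_of_nonneg _ _ (by linarith [ht1 x]),
          ENNReal.mul_div_cancel two_ne_zero ofNat_ne_top]
    _ ≤ 2 ^ t x * ((A / 2) ^ (t x - 1) * (E * (A / 2) ^ (1 - t x) * B)) := by gcongr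
    _ = 2 ^ t x * ((A / 2) ^ (t x - 1) * (A / 2) ^ (1 - t x)) * (E * B) := by ring
    _ = 2 ^ t x * E * B := by
        rw [← ENNReal.rpow_add _ _ hhalf.ne_zero (hhalf.ne_top (by linarith))]
        simp [mul_assoc]

theorem lintegral_iSup_avg_rpow_le_of_isModerate (hpm : Measurable p) (hp : G.IsLogHolder C₀ p)
    (ha : 1 < a) (hap : ∀ x, a ≤ p x) (hP : ∀ x, p x ≤ P) (hK : 0 ≤ K) (hg : Measurable g)
    (hmod : ∀ v x, IsModerate K v x (G.avg v g x)) :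
    ∫⁻ x, (⨆ v, G.avg v g x) ^ p x ≤
      (2 ^ P * ENNReal.ofReal (Real.exp ((K + 1) * C₀))) ^ a *
        (2 * (2 * ENNReal.ofReal (a / (a - 1))) ^ a) * ∫⁻ x, g x ^ p x := by
  have ha0 : 0 < a := zero_lt_one.trans ha
  set C := 2 ^ P * ENNReal.ofReal (Real.exp ((K + 1) * C₀))
  set t : En n → ℝ := fun x => p x / a
  have ht1 : ∀ x, 1 ≤ t x := fun x => (one_le_div ha0).2 (hap x)
  have htm : Measurable t := hpm.div_const a
  have hta : ∀ x (b : ℝ≥0∞), b ^ p x = (b ^ t x) ^ a := fun x b => by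
    rw [← ENNReal.rpow_mul, div_mul_cancel₀ _ ha0.ne']
  have htP : ∀ x, t x ≤ P := fun x => (div_le_self (by linarith [hap x]) ha.le).trans (hP x)
  have pointwise : ∀ x, (⨆ v, G.avg v g x) ^ t x ≤ C * ⨆ v, G.avg v (fun y => g y ^ t y) x := by
    intro x
    have hsup : (⨆ v, G.avg v g x) ^ t x = ⨆ v, G.avg v g x ^ t x :=
      (ENNReal.orderIsoRpow (t x) (by linarith [ht1 x])).map_iSup _
    rw [hsup]
    refine iSup_le fun v => ?_
    refine (G.avg_rpow_le (hp.div_const ha.le) htm ht1 hK hg (hmod v x)).trans ?_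
    refine mul_le_mul' ?_ (le_iSup (fun v => G.avg v (fun y => g y ^ t y) x) v)
    simp only [C]
    gcongr
    exacts [one_le_two, htP x]
  have hm : Measurable fun x => (⨆ v, G.avg v (fun y => g y ^ t y) x) ^ a :=
    (Measurable.iSup fun v => G.measurable_avg v _).pow_const a
  calc ∫⁻ x, (⨆ v, G.avg v g x) ^ p x
      ≤ ∫⁻ x, C ^ a * (⨆ v, G.avg v (fun y => g y ^ t y) x) ^ a := by
        refine lintegral_mono fun x => ?_
        rw [hta, ← ENNReal.mul_rpow_of_nonneg _ _ ha0.le]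
        gcongr
        exact pointwise x
    _ = C ^ a * ∫⁻ x, (⨆ v, G.avg v (fun y => g y ^ t y) x) ^ a := lintegral_const_mul _ hm
    _ ≤ C ^ a * (2 * (2 * ENNReal.ofReal (a / (a - 1))) ^ a * ∫⁻ x, (g x ^ t x) ^ a) := by
        gcongr
        exact G.lintegral_iSup_avg_rpow_le ha (hg.pow htm)
    _ = _ := by simp only [hta, mul_assoc]

end Maximal

end Grid

section Interpolation

theorem rpow_mul_rpow_one_sub_le_add {θ : ℝ} (hθ₀ : 0 ≤ θ) (hθ₁ : θ ≤ 1) (a b : ℝ≥0∞) :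
    a ^ θ * b ^ (1 - θ) ≤ a + b :=
  calc a ^ θ * b ^ (1 - θ) ≤ (a + b) ^ θ * (a + b) ^ (1 - θ) := by
        gcongr
        exacts [le_self_add, le_add_self]
    _ = a + b := by
        rw [← ENNReal.rpow_add_of_nonneg _ _ hθ₀ (sub_nonneg.2 hθ₁), add_sub_cancel,
          ENNReal.rpow_one]

theorem ellNorm_rpow_mul_rpow_le {q : ℝ} (hq : 1 ≤ q) (A B : ℕ → ℝ≥0∞) :
    ellNorm q (fun v => A v ^ (1 / q) * B v ^ (1 - 1 / q)) ≤ (∑' v, A v) + ⨆ v, B v := by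
  have hq0 : 0 < q := zero_lt_one.trans_le hq
  have pow_eq : ∀ v, (A v ^ (1 / q) * B v ^ (1 - 1 / q)) ^ q = A v * B v ^ (q - 1) := fun v => by
    rw [ENNReal.mul_rpow_of_nonneg _ _ hq0.le, ← ENNReal.rpow_mul, ← ENNReal.rpow_mul,
      one_div_mul_cancel hq0.ne', sub_mul, one_div_mul_cancel hq0.ne', ENNReal.rpow_one, one_mul]
  rw [ellNorm_le_iff hq0]
  calc ∑' v, (A v ^ (1 / q) * B v ^ (1 - 1 / q)) ^ q
      ≤ ∑' v, A v * (⨆ w, B w) ^ (q - 1) := by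
        refine ENNReal.tsum_le_tsum fun v => (pow_eq v).trans_le ?_
        gcongr
        exact le_iSup B v
    _ = (⨆ w, B w) ^ (q - 1) * ∑' v, A v := by rw [ENNReal.tsum_mul_right, mul_comm]
    _ ≤ ((∑' v, A v) + ⨆ v, B v) ^ (q - 1) * ((∑' v, A v) + ⨆ v, B v) := by
        gcongr
        exacts [le_add_self, le_self_add]
    _ = ((∑' v, A v) + ⨆ v, B v) ^ q := rpow_sub_one_mul_self _ hq

end Interpolation

section Modular

variable {α : Type*} [MeasurableSpace α] {μ : Measure α} {p : α → ℝ} {P : ℝ} {F H : α → ℝ≥0∞}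

theorem lintegral_const_mul_rpow_le (hF : Measurable F) (hp : Measurable p) (hp0 : ∀ x, 0 ≤ p x)
    (hP : ∀ x, p x ≤ P) {C : ℝ≥0∞} (hC : 1 ≤ C) :
    ∫⁻ x, (C * F x) ^ p x ∂μ ≤ C ^ P * ∫⁻ x, F x ^ p x ∂μ := by
  rw [← lintegral_const_mul _ (hF.pow hp)]
  refine lintegral_mono fun x => ?_
  rw [ENNReal.mul_rpow_of_nonneg _ _ (hp0 x)]
  gcongr
  exact hP x

theorem lintegral_add_rpow_le (hF : Measurable F) (hH : Measurable H) (hp : Measurable p)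
    (hp1 : ∀ x, 1 ≤ p x) (hP : ∀ x, p x ≤ P) :
    ∫⁻ x, (F x + H x) ^ p x ∂μ ≤ 2 ^ P * (∫⁻ x, F x ^ p x ∂μ + ∫⁻ x, H x ^ p x ∂μ) := by
  rw [← lintegral_add_left (hF.pow hp),
    ← lintegral_const_mul _ ((hF.pow hp).fun_add (hH.pow hp))]
  refine lintegral_mono fun x => (ENNReal.rpow_add_le_mul_rpow_add_rpow _ _ (hp1 x)).trans ?_
  gcongr
  exacts [one_le_two, by linarith [hP x]]

end Modular

section Majorant

variable {n : ℕ} {p q : En n → ℝ} {F : ℕ → En n → ℝ≥0∞} {x : En n} {P : ℝ}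

/-- The pointwise `ℓ^{q(·)}` norm of a sequence of functions, made positive by adding
`tailWeight`. -/
def majorant (q : En n → ℝ) (F : ℕ → En n → ℝ≥0∞) (x : En n) : ℝ≥0∞ :=
  ellNorm (q x) (fun v => F v x) + tailWeight x

/-- The part of `majorant q F` carried by `F v`: these functions sum to at most `3` times the
majorant, and `F v` is bounded by the geometric mean of its share and the majorant, with weight
`1 / q` on the share. -/
def share (q : En n → ℝ) (F : ℕ → En n → ℝ≥0∞) (v : ℕ) (x : En n) : ℝ≥0∞ :=
  F v x ^ q x * majorant q F x ^ (1 - q x) + (2 ^ v)⁻¹ * tailWeight x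

theorem measurable_majorant (hq : Measurable q) (hF : ∀ v, Measurable (F v)) :
    Measurable (majorant q F) :=
  (measurable_ellNorm hq hF).add measurable_tailWeight

theorem measurable_share (hq : Measurable q) (hF : ∀ v, Measurable (F v)) (v : ℕ) :
    Measurable (share q F v) :=
  (((hF v).pow hq).mul ((measurable_majorant hq hF).pow (measurable_const.sub hq))).add
    (measurable_tailWeight.const_mul _)

theorem majorant_ne_zero (q : En n → ℝ) (F : ℕ → En n → ℝ≥0∞) (x : En n) : majorant q F x ≠ 0 := by
  simp [majorant, tailWeight_ne_zero]

theorem tsum_share_le (hq : 0 < q x) : ∑' v, share q F v x ≤ 3 * majorant q F x := by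
  rcases eq_or_ne (majorant q F x) ∞ with htop | hfin
  · simp [htop]
  have hpow : ∑' v, F v x ^ q x ≤ majorant q F x ^ q x := by
    rw [← ellNorm_rpow hq]
    gcongr
    exact le_self_add
  have hgeom : ∑' v : ℕ, ((2 : ℝ≥0∞) ^ v)⁻¹ = 2 := by
    simp only [ENNReal.inv_pow, ENNReal.tsum_geometric, ENNReal.one_sub_inv_two, inv_inv]
  calc ∑' v, share q F v x
      = (∑' v, F v x ^ q x) * majorant q F x ^ (1 - q x) + 2 * tailWeight x := by
        simp only [share, ENNReal.tsum_add, ENNReal.tsum_mul_right, hgeom]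
    _ ≤ majorant q F x ^ q x * majorant q F x ^ (1 - q x) + 2 * majorant q F x := by
        gcongr
        exact le_add_self
    _ = 3 * majorant q F x := by
        rw [← ENNReal.rpow_add _ _ (majorant_ne_zero q F x) hfin, add_sub_cancel, ENNReal.rpow_one]
        ring

theorem le_share_rpow_mul_majorant_rpow (hq : 0 < q x) (hx : majorant q F x ≠ ∞) (v : ℕ) :
    F v x ≤ share q F v x ^ (1 / q x) * majorant q F x ^ (1 - 1 / q x) := by
  set s := majorant q F x
  have hs : s ≠ 0 := majorant_ne_zero q F x
  calc F v x = F v x * s ^ ((1 - q x) * (1 / q x) + (1 - 1 / q x)) := by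
        have : (1 - q x) * (1 / q x) + (1 - 1 / q x) = 0 := by field_simp; ring
        rw [this, ENNReal.rpow_zero, mul_one]
    _ = (F v x ^ q x * s ^ (1 - q x)) ^ (1 / q x) * s ^ (1 - 1 / q x) := by
        rw [ENNReal.rpow_add _ _ hs hx, ENNReal.rpow_mul,
          ENNReal.mul_rpow_of_nonneg _ _ (by positivity), ← ENNReal.rpow_mul (F v x),
          mul_one_div_cancel hq.ne', ENNReal.rpow_one, mul_assoc]
    _ ≤ share q F v x ^ (1 / q x) * s ^ (1 - 1 / q x) := by
        gcongr
        exact le_self_add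

theorem lintegral_majorant_rpow_le (hp : Measurable p) (hp1 : ∀ x, 1 ≤ p x) (hP : ∀ x, p x ≤ P)
    (hq : Measurable q) (hF : ∀ v, Measurable (F v))
    (h : ∫⁻ x, ellNorm (q x) (fun v => F v x) ^ p x ≤ 1) :
    ∫⁻ x, majorant q F x ^ p x ≤ 2 ^ P * (1 + ∫⁻ x : En n, tailWeight x) := by
  refine (lintegral_add_rpow_le (measurable_ellNorm hq hF) measurable_tailWeight hp hp1 hP).trans ?_
  gcongr with x
  exact ENNReal.rpow_le_self_of_le_one (tailWeight_le_one x) (hp1 x)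

theorem lintegral_tsum_share_rpow_le (hp : Measurable p) (hp1 : ∀ x, 1 ≤ p x) (hP : ∀ x, p x ≤ P)
    (hq : Measurable q) (hq0 : ∀ x, 0 < q x) (hF : ∀ v, Measurable (F v))
    (h : ∫⁻ x, ellNorm (q x) (fun v => F v x) ^ p x ≤ 1) :
    ∫⁻ x, (∑' v, share q F v x) ^ p x ≤ 3 ^ P * (2 ^ P * (1 + ∫⁻ x : En n, tailWeight x)) := by
  have hp0 : ∀ x, 0 ≤ p x := fun x => zero_le_one.trans (hp1 x)
  calc ∫⁻ x, (∑' v, share q F v x) ^ p x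
      ≤ ∫⁻ x, (3 * majorant q F x) ^ p x :=
        lintegral_mono fun x => ENNReal.rpow_le_rpow (tsum_share_le (hq0 x)) (hp0 x)
    _ ≤ 3 ^ P * ∫⁻ x, majorant q F x ^ p x :=
        lintegral_const_mul_rpow_le (measurable_majorant hq hF) hp hp0 hP (by norm_num)
    _ ≤ _ := by
        gcongr
        exact lintegral_majorant_rpow_le hp hp1 hP hq hF h

end Majorant

namespace Grid

section VectorValued

variable {n : ℕ} (G : Grid n) {v : ℕ} {x : En n} {K C₀ C₁ P : ℝ} {p q θ : En n → ℝ}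
  {f b s : En n → ℝ≥0∞}

theorem scale_rpow_le_avg_tailWeight (v : ℕ) (x : En n) :
    ENNReal.ofReal (scale v x) ^ (-(((n : ℝ) + 1) * (n + 1))) ≤
      (2 ^ v)⁻¹ * G.avg v tailWeight x := by
  have level_zero : ENNReal.ofReal (scale 0 x) ^ (-(((n : ℝ) + 1) * (n + 1))) ≤
      G.avg v tailWeight x := by
    refine G.le_avg fun y hy => ?_
    rw [tailWeight, ENNReal.rpow_neg, ENNReal.rpow_neg, ENNReal.inv_le_inv, ENNReal.rpow_mul]
    gcongr
    exact G.scale_le_rpow hy 0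
  have one_le : (1 : ℝ) ≤ ((n : ℝ) + 1) * (n + 1) :=
    one_le_mul_of_one_le_of_one_le (by simp) (by simp)
  calc ENNReal.ofReal (scale v x) ^ (-(((n : ℝ) + 1) * (n + 1)))
      = (2 ^ v) ^ (-(((n : ℝ) + 1) * (n + 1))) *
          ENNReal.ofReal (scale 0 x) ^ (-(((n : ℝ) + 1) * (n + 1))) := by
        rw [scale_eq_two_pow_mul, ENNReal.ofReal_mul (by positivity),
          ENNReal.mul_rpow_of_ne_zero (by simp) (by simp [scale_pos]),
          ENNReal.ofReal_pow zero_le_two, ENNReal.ofReal_ofNat]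
    _ ≤ (2 ^ v)⁻¹ * G.avg v tailWeight x := by
        gcongr
        rw [ENNReal.rpow_neg, ENNReal.inv_le_inv]
        exact ENNReal.le_rpow_self_of_one_le (one_le_pow₀ one_le_two) one_le

theorem avg_le_of_lintegral_rpow_le (hp1 : ∀ x, 1 ≤ p x) {D : ℝ≥0∞}
    (hf : ∫⁻ x, f x ^ p x ≤ D) (v : ℕ) (x : En n) : G.avg v f x ≤ 2 ^ (n * v) * (1 + D) :=
  calc G.avg v f x ≤ G.avg v (fun y => 1 + f y ^ p y) x := G.avg_mono fun y _ => by
        simpa using le_add_rpow_mul_rpow one_ne_zero ENNReal.one_ne_top (f y) (hp1 y)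
    _ ≤ 1 + 2 ^ (n * v) * D := by
        rw [G.avg_const_add]
        unfold avg
        gcongr
        exact (setLIntegral_le_lintegral _ _).trans hf
    _ ≤ 2 ^ (n * v) * (1 + D) := by
        rw [mul_add, mul_one]
        gcongr
        exact one_le_pow₀ one_le_two

theorem exists_isModerate_avg (hp1 : ∀ x, 1 ≤ p x) {D : ℝ≥0∞} (hD : D ≠ ∞) :
    ∃ K, 0 ≤ K ∧ ∀ v x f, (∀ y, (2 ^ v)⁻¹ * tailWeight y ≤ f y) → ∫⁻ y, f y ^ p y ≤ D →
      IsModerate K v x (G.avg v f x) := by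
  obtain ⟨m, hm⟩ : ∃ m : ℕ, 1 + D ≤ 2 ^ m := by
    obtain ⟨m, hm⟩ := ENNReal.exists_nat_gt (r := 1 + D) (by finiteness)
    exact ⟨m, hm.le.trans (by exact_mod_cast Nat.lt_two_pow_self.le)⟩
  refine ⟨((n : ℝ) + 1) * (n + 1) + m, by positivity, fun v x f hlow hupp => ⟨?_, ?_⟩⟩
  · calc ENNReal.ofReal (scale v x) ^ (-(((n : ℝ) + 1) * (n + 1) + m))
        ≤ ENNReal.ofReal (scale v x) ^ (-(((n : ℝ) + 1) * (n + 1))) :=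
          ENNReal.rpow_le_rpow_of_exponent_le (one_le_ofReal_scale v x) (by simp)
      _ ≤ (2 ^ v)⁻¹ * G.avg v tailWeight x := G.scale_rpow_le_avg_tailWeight v x
      _ = G.avg v (fun y => (2 ^ v)⁻¹ * tailWeight y) x :=
          (G.avg_const_mul measurable_tailWeight _).symm
      _ ≤ G.avg v f x := G.avg_mono fun y _ => hlow y
  · have two_le : 2 ≤ ENNReal.ofReal (scale v x) := by
      simpa using ENNReal.ofReal_le_ofReal (two_le_scale v x)
    have two_pow_le : 2 ^ v ≤ ENNReal.ofReal (scale v x) := by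
      simpa [ENNReal.ofReal_pow] using ENNReal.ofReal_le_ofReal (two_pow_le_scale v x)
    calc G.avg v f x ≤ 2 ^ (n * v) * (1 + D) := G.avg_le_of_lintegral_rpow_le hp1 hupp v x
      _ ≤ (2 ^ v) ^ n * 2 ^ m := by rw [← pow_mul, mul_comm v]; gcongr
      _ ≤ ENNReal.ofReal (scale v x) ^ n * ENNReal.ofReal (scale v x) ^ m := by gcongr
      _ = ENNReal.ofReal (scale v x) ^ ((n : ℝ) + m) := by
          rw [← pow_add, ← ENNReal.rpow_natCast, Nat.cast_add]
      _ ≤ _ := ENNReal.rpow_le_rpow_of_exponent_le (one_le_ofReal_scale v x) (by nlinarith)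

/-- Moderate averages may be raised to `θ y` in place of `θ x` at the cost of a constant; this
reduces Hölder's inequality with a variable exponent to Young's inequality on the cell. -/
theorem avg_le_avg_rpow_mul_avg_rpow (hθ : G.IsLogHolder C₁ θ) (hθ₀ : ∀ x, 0 ≤ θ x)
    (hθ₁ : ∀ x, θ x ≤ 1) (hK : 0 ≤ K) (hb : Measurable b) (hs : Measurable s)
    (hbmod : IsModerate K v x (G.avg v b x)) (hsmod : IsModerate K v x (G.avg v s x))
    (hf : ∀ᵐ y, f y ≤ b y ^ θ y * s y ^ (1 - θ y)) :
    G.avg v f x ≤ 2 * ENNReal.ofReal (Real.exp (K * C₁)) ^ 2 *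
      (G.avg v b x ^ θ x * G.avg v s x ^ (1 - θ x)) := by
  set A := G.avg v b x
  set B := G.avg v s x
  set E := ENNReal.ofReal (Real.exp (K * C₁))
  have hA₀ := hbmod.ne_zero
  have hB₀ := hsmod.ne_zero
  have hA := hbmod.ne_top hK
  have hB := hsmod.ne_top hK
  have normalize : ∀ {a c : ℝ≥0∞} (t : ℝ), 0 ≤ t → c ≠ 0 → c ≠ ∞ → a ^ t = c ^ t * (c⁻¹ * a) ^ t :=
    fun t ht h₀ h => by
      rw [← ENNReal.mul_rpow_of_nonneg _ _ ht, ← mul_assoc, ENNReal.mul_inv_cancel h₀ h, one_mul]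
  have pointwise : ∀ y, G.cell v y = G.cell v x → b y ^ θ y * s y ^ (1 - θ y) ≤
      E ^ 2 * (A ^ θ x * B ^ (1 - θ x)) * (A⁻¹ * b y + B⁻¹ * s y) := fun y hy => by
    have hy' := hθ v x y hy.symm
    calc b y ^ θ y * s y ^ (1 - θ y)
        = A ^ θ y * B ^ (1 - θ y) * ((A⁻¹ * b y) ^ θ y * (B⁻¹ * s y) ^ (1 - θ y)) := by
          rw [normalize (θ y) (hθ₀ y) hA₀ hA, normalize (1 - θ y) (sub_nonneg.2 (hθ₁ y)) hB₀ hB]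
          ring
      _ ≤ (E * A ^ θ x) * (E * B ^ (1 - θ x)) * (A⁻¹ * b y + B⁻¹ * s y) := by
          gcongr ?_ * ?_ * ?_
          · exact hbmod.rpow_le hK (by rwa [abs_sub_comm])
          · exact hsmod.rpow_le hK (by rwa [show 1 - θ y - (1 - θ x) = θ x - θ y by ring])
          · exact rpow_mul_rpow_one_sub_le_add (hθ₀ y) (hθ₁ y) _ _
      _ = _ := by ring
  have hsum : G.avg v (fun y => A⁻¹ * b y + B⁻¹ * s y) x = 2 := by
    rw [avg, lintegral_add_left (hb.const_mul _), mul_add, ← avg, ← avg, G.avg_const_mul hb,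
      G.avg_const_mul hs, ENNReal.inv_mul_cancel hA₀ hA, ENNReal.inv_mul_cancel hB₀ hB]
    norm_num
  calc G.avg v f x ≤ G.avg v (fun y => b y ^ θ y * s y ^ (1 - θ y)) x := G.avg_mono_ae hf
    _ ≤ G.avg v (fun y => E ^ 2 * (A ^ θ x * B ^ (1 - θ x)) * (A⁻¹ * b y + B⁻¹ * s y)) x :=
        G.avg_mono pointwise
    _ = 2 * E ^ 2 * (A ^ θ x * B ^ (1 - θ x)) := by
        rw [G.avg_const_mul ((hb.const_mul _).fun_add (hs.const_mul _)), hsum]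
        ring

theorem ellNorm_avg_le {F : ℕ → En n → ℝ≥0∞} (hq : ∀ x, 1 ≤ q x) (hqm : Measurable q)
    (hqC : G.IsLogHolder C₁ fun x => 1 / q x) (hF : ∀ v, Measurable (F v)) (hK : 0 ≤ K)
    (hmaj : ∀ v x, IsModerate K v x (G.avg v (majorant q F) x))
    (hshare : ∀ v x, IsModerate K v x (G.avg v (share q F v) x))
    (hfin : ∀ᵐ x, majorant q F x ≠ ∞) (x : En n) :
    ellNorm (q x) (fun v => G.avg v (F v) x) ≤ 2 * ENNReal.ofReal (Real.exp (K * C₁)) ^ 2 *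
      ((∑' v, G.avg v (share q F v) x) + ⨆ v, G.avg v (majorant q F) x) := by
  have hq0 : ∀ x, 0 < q x := fun x => zero_lt_one.trans_le (hq x)
  calc ellNorm (q x) (fun v => G.avg v (F v) x)
      ≤ ellNorm (q x) (fun v => 2 * ENNReal.ofReal (Real.exp (K * C₁)) ^ 2 *
          (G.avg v (share q F v) x ^ (1 / q x) * G.avg v (majorant q F) x ^ (1 - 1 / q x))) := by
        refine ellNorm_mono (hq0 x) fun v => ?_
        exact G.avg_le_avg_rpow_mul_avg_rpow hqC (fun y => (one_div_pos.2 (hq0 y)).le)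
          (fun y => (div_le_one (hq0 y)).2 (hq y)) hK (measurable_share hqm hF v)
          (measurable_majorant hqm hF) (hshare v x) (hmaj v x)
          (hfin.mono fun y hy => le_share_rpow_mul_majorant_rpow (hq0 y) hy v)
    _ ≤ _ := by
        rw [ellNorm_const_mul (hq0 x)]
        gcongr
        exact ellNorm_rpow_mul_rpow_le (hq x) _ _

theorem lintegral_ellNorm_avg_rpow_le {F : ℕ → En n → ℝ≥0∞} (hpm : Measurable p)
    (hp1 : ∀ x, 1 ≤ p x) (hP : ∀ x, p x ≤ P) (hqm : Measurable q)
    (hqC : G.IsLogHolder C₁ fun x => 1 / q x) (hq : ∀ x, 1 ≤ q x) (hF : ∀ v, Measurable (F v))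
    (hK : 0 ≤ K) (hmaj : ∀ v x, IsModerate K v x (G.avg v (majorant q F) x))
    (hshare : ∀ v x, IsModerate K v x (G.avg v (share q F v) x))
    (hfin : ∫⁻ x, majorant q F x ^ p x ≠ ∞) :
    ∫⁻ x, ellNorm (q x) (fun v => G.avg v (F v) x) ^ p x ≤
      (2 * ENNReal.ofReal (Real.exp (K * C₁)) ^ 2) ^ P *
        (2 ^ P * ((∫⁻ x, (∑' v, G.avg v (share q F v) x) ^ p x) +
          ∫⁻ x, (⨆ v, G.avg v (majorant q F) x) ^ p x)) := by
  set E := ENNReal.ofReal (Real.exp (K * C₁))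
  have hE : 1 ≤ E := by simpa [E] using mul_nonneg hK hqC.nonneg
  have hp0 : ∀ x, 0 < p x := fun x => zero_lt_one.trans_le (hp1 x)
  have ae_ne_top : ∀ᵐ x, majorant q F x ≠ ∞ :=
    (ae_lt_top ((measurable_majorant hqm hF).pow hpm) hfin).mono fun x hx =>
      ((ENNReal.rpow_lt_top_iff_of_pos (hp0 x)).1 hx).ne
  set S : En n → ℝ≥0∞ := fun x => ∑' v, G.avg v (share q F v) x
  set T : En n → ℝ≥0∞ := fun x => ⨆ v, G.avg v (majorant q F) x
  have hS : Measurable S := .tsum fun v => G.measurable_avg v _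
  have hT : Measurable T := .iSup fun v => G.measurable_avg v _
  calc ∫⁻ x, ellNorm (q x) (fun v => G.avg v (F v) x) ^ p x
      ≤ ∫⁻ x, (2 * E ^ 2 * (S x + T x)) ^ p x := lintegral_mono fun x =>
        ENNReal.rpow_le_rpow (G.ellNorm_avg_le hq hqm hqC hF hK hmaj hshare ae_ne_top x) (hp0 x).le
    _ ≤ (2 * E ^ 2) ^ P * ∫⁻ x, (S x + T x) ^ p x :=
        lintegral_const_mul_rpow_le (hS.fun_add hT) hpm (fun x => (hp0 x).le) hP
          (one_le_mul one_le_two (one_le_pow₀ hE))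
    _ ≤ _ := by
        gcongr
        exact lintegral_add_rpow_le hS hT hpm hp1 hP

theorem exists_isModerate_avg_majorant_share (hpm : Measurable p) (hp1 : ∀ x, 1 ≤ p x)
    (hP : ∀ x, p x ≤ P) (hqm : Measurable q) (hq : ∀ x, 0 < q x) :
    ∃ K, 0 ≤ K ∧ ∀ F : ℕ → En n → ℝ≥0∞, (∀ v, Measurable (F v)) →
      ∫⁻ x, ellNorm (q x) (fun v => F v x) ^ p x ≤ 1 → ∀ v x,
        IsModerate K v x (G.avg v (majorant q F) x) ∧
          IsModerate K v x (G.avg v (share q F v) x) := by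
  have hp0 : ∀ x, 0 ≤ p x := fun x => zero_le_one.trans (hp1 x)
  have hP0 : 0 ≤ P := (hp0 0).trans (hP 0)
  have htail := lintegral_tailWeight_ne_top (n := n)
  obtain ⟨K, hK, hmod⟩ := G.exists_isModerate_avg hp1
    (D := 3 ^ P * (2 ^ P * (1 + ∫⁻ x : En n, tailWeight x))) (by finiteness)
  refine ⟨K, hK, fun F hF hF1 v x => ?_⟩
  have hshare := lintegral_tsum_share_rpow_le hpm hp1 hP hqm hq hF hF1
  constructor
  · refine hmod v x _ (fun y => ?_) ?_
    · calc (2 ^ v)⁻¹ * tailWeight y ≤ 1 * tailWeight y := by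
            gcongr
            exact ENNReal.inv_le_one.2 (one_le_pow₀ one_le_two)
        _ ≤ majorant q F y := by rw [one_mul]; exact le_add_self
    · refine (lintegral_majorant_rpow_le hpm hp1 hP hqm hF hF1).trans ?_
      refine le_mul_of_one_le_left' ?_
      simpa using ENNReal.rpow_le_rpow_of_exponent_le (x := 3) (by norm_num) hP0
  · refine hmod v x _ (fun y => le_add_self) (le_trans (lintegral_mono fun y => ?_) hshare)
    exact ENNReal.rpow_le_rpow (ENNReal.le_tsum v) (hp0 y)

theorem exists_lintegral_ellNorm_avg_rpow_le {a : ℝ} (hpm : Measurable p)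
    (hp : G.IsLogHolder C₀ p) (ha : 1 < a) (hap : ∀ x, a ≤ p x) (hP : ∀ x, p x ≤ P)
    (hqm : Measurable q) (hqC : G.IsLogHolder C₁ fun x => 1 / q x) (hq : ∀ x, 1 ≤ q x) :
    ∃ C : ℝ≥0∞, C ≠ ∞ ∧ ∀ F : ℕ → En n → ℝ≥0∞, (∀ v, Measurable (F v)) →
      ∫⁻ x, ellNorm (q x) (fun v => F v x) ^ p x ≤ 1 →
        ∫⁻ x, ellNorm (q x) (fun v => G.avg v (F v) x) ^ p x ≤ C := by
  have hp1 : ∀ x, 1 ≤ p x := fun x => ha.le.trans (hap x)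
  have hq0 : ∀ x, 0 < q x := fun x => zero_lt_one.trans_le (hq x)
  have hP0 : 0 ≤ P := zero_le_one.trans ((hp1 0).trans (hP 0))
  have ha0 : 0 ≤ a := zero_le_one.trans ha.le
  obtain ⟨K, hK, hmod⟩ := G.exists_isModerate_avg_majorant_share hpm hp1 hP hqm hq0
  set D := 2 ^ P * (1 + ∫⁻ x : En n, tailWeight x)
  have hD : D ≠ ∞ := by have := lintegral_tailWeight_ne_top (n := n); finiteness
  set Csum := 2 * (2 * (ENNReal.ofReal P * ENNReal.ofReal (Real.exp ((K + 1) * C₀)))) ^ P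
  set Csup := (2 ^ P * ENNReal.ofReal (Real.exp ((K + 1) * C₀))) ^ a *
    (2 * (2 * ENNReal.ofReal (a / (a - 1))) ^ a)
  refine ⟨(2 * ENNReal.ofReal (Real.exp (K * C₁)) ^ 2) ^ P *
    (2 ^ P * (Csum * (3 ^ P * D) + Csup * D)), by finiteness, fun F hF hF1 => ?_⟩
  have hmaj : ∫⁻ x, majorant q F x ^ p x ≤ D := lintegral_majorant_rpow_le hpm hp1 hP hqm hF hF1
  have hsum : ∫⁻ x, (∑' v, G.avg v (share q F v) x) ^ p x ≤ Csum * (3 ^ P * D) :=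
    (G.lintegral_tsum_avg_rpow_le hpm hp hp1 hP (add_nonneg hK zero_le_one)
      (measurable_share hqm hF) fun v x => .sum_range hK (fun w => (hmod F hF hF1 w x).2) v).trans
      (mul_le_mul_right (lintegral_tsum_share_rpow_le hpm hp1 hP hqm hq0 hF hF1) _)
  have hsup : ∫⁻ x, (⨆ v, G.avg v (majorant q F) x) ^ p x ≤ Csup * D :=
    (G.lintegral_iSup_avg_rpow_le_of_isModerate hpm hp ha hap hP hK (measurable_majorant hqm hF)
      fun v x => (hmod F hF hF1 v x).1).trans (mul_le_mul_right hmaj _)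
  refine (G.lintegral_ellNorm_avg_rpow_le hpm hp1 hP hqm hqC hq hF hK
    (fun v x => (hmod F hF hF1 v x).1) (fun v x => (hmod F hF hF1 v x).2)
    (ne_top_of_le_ne_top hD hmaj)).trans ?_
  gcongr

theorem exists_mixedNorm_avg_le {a : ℝ} (hpm : Measurable p) (hp : G.IsLogHolder C₀ p)
    (ha : 1 < a) (hap : ∀ x, a ≤ p x) (hP : ∀ x, p x ≤ P) (hqm : Measurable q)
    (hqC : G.IsLogHolder C₁ fun x => 1 / q x) (hq : ∀ x, 1 ≤ q x) :
    ∃ C : ℝ≥0∞, C ≠ ∞ ∧ ∀ F : ℕ → En n → ℝ≥0∞, (∀ v, Measurable (F v)) →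
      mixedNorm p q (fun v => G.avg v (F v)) ≤ C * mixedNorm p q F := by
  obtain ⟨C, hC, hbound⟩ := G.exists_lintegral_ellNorm_avg_rpow_le hpm hp ha hap hP hqm hqC hq
  refine ⟨1 + C, by finiteness, fun F hF => ?_⟩
  refine mixedNorm_le_mul_of_lintegral_le (fun x => ha.le.trans (hap x))
    (fun x => zero_lt_one.trans_le (hq x)) le_self_add (by finiteness) fun c _ hc => ?_
  simp_rw [← G.avg_const_mul (hF _)]
  exact (hbound _ (fun v => (hF v).const_mul c) hc).trans le_add_self

end VectorValued

end Grid

section Convolution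

theorem rpow_lintegral_le_lintegral_rpow {α : Type*} [MeasurableSpace α] {ν : Measure α}
    {f : α → ℝ≥0∞} {r : ℝ} (hν : ν univ ≤ 1) (hr : 1 ≤ r) (hf : AEMeasurable f ν) :
    (∫⁻ x, f x ∂ν) ^ r ≤ ∫⁻ x, f x ^ r ∂ν := by
  have hr0 : 0 < r := zero_lt_one.trans_le hr
  have hpow : ν univ ^ (1 / 1 - 1 / r) ≤ 1 :=
    ENNReal.rpow_le_one hν (sub_nonneg.2 (one_div_le_one_div_of_le one_pos hr))
  have holder := (eLpNorm'_le_eLpNorm'_mul_rpow_measure_univ one_pos hr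
    hf.aestronglyMeasurable).trans (mul_le_of_le_one_right' hpow)
  simp only [eLpNorm'_eq_lintegral_enorm, enorm_eq_self, ENNReal.rpow_one, div_one] at holder
  rwa [one_div, ENNReal.le_rpow_inv_iff hr0] at holder

section Group

variable {G : Type*} [AddGroup G] [MeasurableSpace G] {μ : Measure G} {k f g : G → ℝ≥0∞}

theorem lconvolution_mono_right (h : ∀ y, f y ≤ g y) (x : G) : (k ⋆ₗ[μ] f) x ≤ (k ⋆ₗ[μ] g) x :=
  lintegral_mono fun y => mul_le_mul_right (h _) (k y)

theorem lconvolution_le_mul_lintegral {a : ℝ≥0∞} (hf : ∀ y, f y ≤ a) (hk : Measurable k) (x : G) :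
    (k ⋆ₗ[μ] f) x ≤ a * ∫⁻ y, k y ∂μ := by
  rw [lconvolution_def, mul_comm, ← lintegral_mul_const _ hk]
  exact lintegral_mono fun y => mul_le_mul_right (hf _) (k y)

variable [MeasurableAdd₂ G] [MeasurableNeg G]

theorem lconvolution_rpow_le {r : ℝ} (hr : 1 ≤ r) (hk : Measurable k) (hk₁ : ∫⁻ y, k y ∂μ ≤ 1)
    (hf : Measurable f) (x : G) :
    (k ⋆ₗ[μ] f) x ^ r ≤ (k ⋆ₗ[μ] fun y => f y ^ r) x := by
  have hfx : Measurable fun y => f (-y + x) := by fun_prop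
  have jensen := rpow_lintegral_le_lintegral_rpow (ν := μ.withDensity k)
    (by rwa [withDensity_apply _ .univ, setLIntegral_univ]) hr hfx.aemeasurable
  rwa [lintegral_withDensity_eq_lintegral_mul _ hk hfx,
    lintegral_withDensity_eq_lintegral_mul _ hk (hfx.pow_const r)] at jensen

theorem lconvolution_add_right (hk : Measurable k) (hf : Measurable f) (x : G) :
    (k ⋆ₗ[μ] fun y => f y + g y) x = (k ⋆ₗ[μ] f) x + (k ⋆ₗ[μ] g) x := by
  simp only [lconvolution_def, mul_add]
  exact lintegral_add_left (by fun_prop) _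

theorem lconvolution_const_mul_right (hk : Measurable k) (hf : Measurable f) (a : ℝ≥0∞) (x : G) :
    (k ⋆ₗ[μ] fun y => a * f y) x = a * (k ⋆ₗ[μ] f) x := by
  simp only [lconvolution_def, mul_left_comm _ a]
  exact lintegral_const_mul _ (by fun_prop)

theorem lintegral_lconvolution [SFinite μ] [μ.IsAddLeftInvariant] (hk : Measurable k)
    (hf : Measurable f) : ∫⁻ x, (k ⋆ₗ[μ] f) x ∂μ = (∫⁻ y, k y ∂μ) * ∫⁻ y, f y ∂μ := by
  simp only [lconvolution_def]
  rw [lintegral_lintegral_swap (by fun_prop), ← lintegral_mul_const _ hk]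
  refine lintegral_congr fun y => ?_
  rw [lintegral_const_mul _ (by fun_prop), lintegral_add_left_eq_self]

end Group

end Convolution

section VariableExponent

variable {n : ℕ} {k f : En n → ℝ≥0∞} {p : En n → ℝ} {r P C₀ : ℝ}

theorem GlobLogHolder.exists_abs_sub_mul_log_scale_le {c : ℝ} (hp : GlobLogHolder c p)
    (hp1 : ∀ x, 1 ≤ p x) :
    ∃ r C₀, 1 ≤ r ∧ ∀ x, |p x - r| * Real.log (scale 0 x) ≤ C₀ := by
  obtain ⟨-, gi, cd, -, hdec⟩ := hp
  refine ⟨max gi 1, cd, le_max_right _ _, fun x => ?_⟩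
  have hlog : 0 < Real.log (Real.exp 1 + ‖x‖) :=
    zero_lt_one.trans_le (one_le_log_exp_one_add (norm_nonneg x))
  have hmax : |p x - max gi 1| ≤ |p x - gi| := by
    simpa [max_eq_left (hp1 x)] using abs_max_sub_max_le_abs (p x) gi 1
  simpa [scale] using (le_div_iff₀ hlog).1 (hmax.trans (hdec x))

theorem rpow_le_mul_rpow_add_tailWeight {x : En n} {u : ℝ≥0∞} (hu : u ≤ 1) {s t : ℝ} (hs : 1 ≤ s)
    (hst : |s - t| * Real.log (scale 0 x) ≤ C₀) :
    u ^ s ≤ ENNReal.ofReal (Real.exp (((n : ℝ) + 1) * C₀)) * u ^ t + tailWeight x := by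
  rcases le_total u (tailWeight x) with h | h
  · exact ((ENNReal.rpow_le_self_of_le_one hu hs).trans h).trans le_add_self
  · have hn : (0 : ℝ) ≤ (n : ℝ) + 1 := by positivity
    have hmod : IsModerate ((n : ℝ) + 1) 0 x u := by
      refine ⟨h, hu.trans ?_⟩
      simpa using ENNReal.rpow_le_rpow_of_exponent_le (one_le_ofReal_scale 0 x) hn
    exact (hmod.rpow_le hn hst).trans le_self_add

theorem lintegral_lconvolution_rpow_le_of_le_one (hk : Measurable k) (hk₁ : ∫⁻ y, k y ≤ 1)
    (hf : Measurable f) (hf1 : ∀ y, f y ≤ 1) (hpm : Measurable p) (hp1 : ∀ x, 1 ≤ p x) (hr : 1 ≤ r)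
    (hpr : ∀ x, |p x - r| * Real.log (scale 0 x) ≤ C₀) :
    ∫⁻ x, (k ⋆ₗ f) x ^ p x ≤
      ENNReal.ofReal (Real.exp (((n : ℝ) + 1) * C₀)) *
        (ENNReal.ofReal (Real.exp (((n : ℝ) + 1) * C₀)) * (∫⁻ x, f x ^ p x) +
          ∫⁻ x : En n, tailWeight x) + ∫⁻ x : En n, tailWeight x := by
  set E := ENNReal.ofReal (Real.exp (((n : ℝ) + 1) * C₀))
  have conv_le_one : ∀ x, (k ⋆ₗ f) x ≤ 1 := fun x =>
    (lconvolution_le_mul_lintegral hf1 hk x).trans (by rwa [one_mul])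
  calc ∫⁻ x, (k ⋆ₗ f) x ^ p x
      ≤ ∫⁻ x, (E * (k ⋆ₗ fun y => f y ^ r) x + tailWeight x) := lintegral_mono fun x =>
        (rpow_le_mul_rpow_add_tailWeight (conv_le_one x) (hp1 x) (hpr x)).trans <| by
          gcongr
          exact lconvolution_rpow_le hr hk hk₁ hf x
    _ = E * ((∫⁻ y, k y) * ∫⁻ x, f x ^ r) + ∫⁻ x : En n, tailWeight x := by
        rw [lintegral_add_right _ measurable_tailWeight,
          lintegral_const_mul _ (measurable_lconvolution _ hk (hf.pow_const r)),
          lintegral_lconvolution hk (hf.pow_const r)]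
    _ ≤ E * (∫⁻ x, (E * f x ^ p x + tailWeight x)) + ∫⁻ x : En n, tailWeight x := by
        gcongr
        refine (mul_le_of_le_one_left' hk₁).trans (lintegral_mono fun x => ?_)
        exact rpow_le_mul_rpow_add_tailWeight (hf1 x) hr (by rw [abs_sub_comm]; exact hpr x)
    _ = _ := by rw [lintegral_add_right _ measurable_tailWeight, lintegral_const_mul _ (hf.pow hpm)]

theorem lintegral_lconvolution_rpow_le_one (hk : Measurable k) (hk₁ : ∫⁻ y, k y ≤ 1)
    (hk_le : ∀ y, k y ≤ 1) (hf : Measurable f) (hf₁ : ∫⁻ y, f y ≤ 1) (hp1 : ∀ x, 1 ≤ p x) :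
    ∫⁻ x, (k ⋆ₗ f) x ^ p x ≤ 1 := by
  have conv_le_one : ∀ x, (k ⋆ₗ f) x ≤ 1 := fun x => by
    rw [lconvolution_comm]
    exact (lconvolution_le_mul_lintegral hk_le hf x).trans (by rwa [one_mul])
  calc ∫⁻ x, (k ⋆ₗ f) x ^ p x ≤ ∫⁻ x, (k ⋆ₗ f) x :=
        lintegral_mono fun x => ENNReal.rpow_le_self_of_le_one (conv_le_one x) (hp1 x)
    _ = (∫⁻ y, k y) * ∫⁻ y, f y := lintegral_lconvolution hk hf
    _ ≤ 1 := mul_le_one' hk₁ hf₁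

theorem lintegral_lconvolution_rpow_le (hk : Measurable k) (hk₁ : ∫⁻ y, k y ≤ 1)
    (hk_le : ∀ y, k y ≤ 1) (hf : Measurable f) (hpm : Measurable p) (hp1 : ∀ x, 1 ≤ p x)
    (hP : ∀ x, p x ≤ P) (hr : 1 ≤ r) (hpr : ∀ x, |p x - r| * Real.log (scale 0 x) ≤ C₀)
    (hf₁ : ∫⁻ x, f x ^ p x ≤ 1) :
    ∫⁻ x, (k ⋆ₗ f) x ^ p x ≤
      2 ^ P * (1 + (ENNReal.ofReal (Real.exp (((n : ℝ) + 1) * C₀)) *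
        (ENNReal.ofReal (Real.exp (((n : ℝ) + 1) * C₀)) +
          ∫⁻ x : En n, tailWeight x) + ∫⁻ x : En n, tailWeight x)) := by
  have hp0 : ∀ x, 0 ≤ p x := fun x => zero_le_one.trans (hp1 x)
  have hfp : Measurable fun x => f x ^ p x := hf.pow hpm
  have hfm : Measurable fun x => min (f x) 1 := hf.min measurable_const
  have split : ∀ y, f y ≤ f y ^ p y + min (f y) 1 := fun y => by
    rcases le_total (f y) 1 with h | h
    · rw [min_eq_left h]; exact le_add_self
    · exact (ENNReal.le_rpow_self_of_one_le h (hp1 y)).trans le_self_add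
  calc ∫⁻ x, (k ⋆ₗ f) x ^ p x
      ≤ ∫⁻ x, ((k ⋆ₗ fun y => f y ^ p y) x + (k ⋆ₗ fun y => min (f y) 1) x) ^ p x :=
        lintegral_mono fun x => ENNReal.rpow_le_rpow
          ((lconvolution_mono_right split x).trans (lconvolution_add_right hk hfp x).le) (hp0 x)
    _ ≤ 2 ^ P * ((∫⁻ x, (k ⋆ₗ fun y => f y ^ p y) x ^ p x) +
          ∫⁻ x, (k ⋆ₗ fun y => min (f y) 1) x ^ p x) :=
        lintegral_add_rpow_le (measurable_lconvolution _ hk hfp)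
          (measurable_lconvolution _ hk hfm) hpm hp1 hP
    _ ≤ _ := by
        gcongr
        · exact lintegral_lconvolution_rpow_le_one hk hk₁ hk_le hfp hf₁ hp1
        · refine (lintegral_lconvolution_rpow_le_of_le_one hk hk₁ hfm (fun y => min_le_right _ _)
            hpm hp1 hr hpr).trans ?_
          gcongr
          refine mul_le_of_le_one_right' (le_trans (lintegral_mono fun x => ?_) hf₁)
          exact ENNReal.rpow_le_rpow (min_le_left _ _) (hp0 x)

theorem GlobLogHolder.exists_luxNorm_lconvolution_le {c : ℝ} (hp : GlobLogHolder c p)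
    (hp1 : ∀ x, 1 ≤ p x) :
    ∃ C : ℝ≥0∞, C ≠ ∞ ∧ ∀ k f : En n → ℝ≥0∞, Measurable k → ∫⁻ y, k y ≤ 1 → (∀ y, k y ≤ 1) →
      Measurable f → luxNorm p (k ⋆ₗ f) ≤ C * luxNorm p f := by
  obtain ⟨r, C₀, hr, hpr⟩ := hp.exists_abs_sub_mul_log_scale_le hp1
  obtain ⟨P, hP⟩ := hp.exists_forall_le
  have hP0 : 0 ≤ P := zero_le_one.trans ((hp1 0).trans (hP 0))
  have htail := lintegral_tailWeight_ne_top (n := n)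
  set E := ENNReal.ofReal (Real.exp (((n : ℝ) + 1) * C₀))
  set D := 2 ^ P * (1 + (E * (E + ∫⁻ x : En n, tailWeight x) + ∫⁻ x : En n, tailWeight x))
  have hD : D ≠ ∞ := by finiteness
  refine ⟨1 + D, by finiteness, fun k f hk hk₁ hk_le hf => ?_⟩
  refine luxNorm_le_mul_of_lintegral_le hp1 le_self_add (by finiteness) fun c _ _ hc => ?_
  simp_rw [ENNReal.div_eq_inv_mul] at hc ⊢
  simp_rw [← lconvolution_const_mul_right hk hf]
  exact (lintegral_lconvolution_rpow_le hk hk₁ hk_le (hf.const_mul _)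
    hp.continuous.measurable hp1 hP hr hpr hc).trans le_add_self

end VariableExponent

section ShiftedGrid

theorem floor_eq_of_floor_two_mul_eq {a b : ℝ} (h : ⌊2 * a⌋ = ⌊2 * b⌋) : ⌊a⌋ = ⌊b⌋ := by
  have half : ∀ c : ℝ, ⌊c⌋ = ⌊2 * c⌋ / 2 := fun c => by
    simpa using Int.floor_div_natCast (2 * c) 2
  rw [half a, half b, h]

variable {n : ℕ}

theorem norm_le_of_forall_abs_le_one {z : En n} (h : ∀ i, |z i| ≤ 1) : ‖z‖ ≤ n := by
  have hn : n ≤ n ^ 2 := Nat.le_self_pow two_ne_zero n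
  rw [EuclideanSpace.norm_eq]
  refine Real.sqrt_le_iff.2 ⟨n.cast_nonneg, ?_⟩
  calc ∑ i, ‖z i‖ ^ 2 ≤ ∑ _i : Fin n, (1 : ℝ) :=
        Finset.sum_le_sum fun i _ => pow_le_one₀ (norm_nonneg _) (h i)
    _ = n := by simp
    _ ≤ (n : ℝ) ^ 2 := by exact_mod_cast hn

theorem volume_setOf_floor_eq (v : ℕ) (t : Fin n → ℝ) (m : Fin n → ℤ) :
    volume {y : En n | (fun i => ⌊2 ^ v * (y i - t i)⌋) = m} = ((2 : ℝ≥0∞) ^ (n * v))⁻¹ := by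
  have box : {y : En n | (fun i => ⌊2 ^ v * (y i - t i)⌋) = m} = WithLp.ofLp ⁻¹'
      univ.pi fun i => Ico ((m i : ℝ) / 2 ^ v + t i) (((m i : ℝ) + 1) / 2 ^ v + t i) := by
    ext y
    simp only [mem_ofPred_eq, mem_preimage, mem_pi, mem_univ, true_imp_iff, mem_Ico, funext_iff]
    refine forall_congr' fun i => ?_
    rw [Int.floor_eq_iff, ← le_sub_iff_add_le, div_le_iff₀ (by positivity),
      ← sub_lt_iff_lt_add (c := t i), lt_div_iff₀ (by positivity), mul_comm (2 ^ v) (y i - t i)]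
  have side : ∀ i, ENNReal.ofReal (((m i : ℝ) + 1) / 2 ^ v + t i - ((m i : ℝ) / 2 ^ v + t i)) =
      ((2 : ℝ≥0∞) ^ v)⁻¹ := fun i => by
    rw [add_sub_add_right_eq_sub, ← sub_div, add_sub_cancel_left, one_div,
      ENNReal.ofReal_inv_of_pos (by positivity), ENNReal.ofReal_pow zero_le_two, ofReal_ofNat]
  rw [box, (PiLp.volume_preserving_ofLp (Fin n)).measure_preimage
    (MeasurableSet.univ_pi fun i => measurableSet_Ico).nullMeasurableSet, volume_pi_pi]
  simp only [Real.volume_Ico, side, Finset.prod_const, Finset.card_univ, Fintype.card_fin]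
  rw [mul_comm n v, pow_mul, ENNReal.inv_pow, ENNReal.inv_pow, ENNReal.inv_pow]

/-- The standard dyadic grid of `ℝ^n` translated by `t`. -/
def shiftedGrid (n : ℕ) (t : Fin n → ℝ) : Grid n where
  cell v x i := ⌊2 ^ v * (x i - t i)⌋
  measurable_cell v :=
    measurable_pi_lambda _ fun i => Int.measurable_floor.comp (by fun_prop)
  cell_eq_of_succ v x y h := by
    funext i
    apply floor_eq_of_floor_two_mul_eq
    simpa only [pow_succ', mul_assoc] using congrFun h i
  volume_cell v x := volume_setOf_floor_eq v t _
  norm_sub_mul_le v x y h := by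
    have coord : ∀ i, |((2 : ℝ) ^ v • (x - y)) i| ≤ 1 := fun i => by
      simpa [← mul_sub] using (Int.abs_sub_lt_one_of_floor_eq_floor (congrFun h i)).le
    simpa [norm_smul, mul_comm] using norm_le_of_forall_abs_le_one coord

-- A lattice point and a point of the lattice shifted by `2 ^ j / 3` differ by at least `1 / 3`,
-- because `3` does not divide `2 ^ j`.
theorem floor_eq_or_floor_sub_eq (j : ℕ) {a b : ℝ} (h : |a - b| ≤ 1 / 3) :
    ⌊a⌋ = ⌊b⌋ ∨ ⌊a - 2 ^ j / 3⌋ = ⌊b - 2 ^ j / 3⌋ := by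
  wlog hab : a ≤ b generalizing a b
  · exact (this (by rwa [abs_sub_comm]) (le_of_not_ge hab)).imp Eq.symm Eq.symm
  by_contra! hne
  have separated : ∀ {u w : ℝ}, u ≤ w → ⌊u⌋ ≠ ⌊w⌋ → u < ⌊w⌋ := fun huw hn =>
    Int.floor_lt.1 (lt_of_le_of_ne (Int.floor_le_floor huw) hn)
  have ha := separated hab hne.1
  have ha' := separated (sub_le_sub_right hab _) hne.2
  have hb := Int.floor_le b
  have hb' := Int.floor_le (b - 2 ^ j / 3)
  rw [abs_le] at h
  have lt : 3 * (⌊b⌋ - ⌊b - 2 ^ j / 3⌋) - 2 ^ j < 1 := by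
    exact_mod_cast (by linarith : (3 * ((⌊b⌋ : ℝ) - ⌊b - 2 ^ j / 3⌋) - 2 ^ j) < 1)
  have gt : -1 < 3 * (⌊b⌋ - ⌊b - 2 ^ j / 3⌋) - 2 ^ j := by
    exact_mod_cast (by linarith : -1 < (3 * ((⌊b⌋ : ℝ) - ⌊b - 2 ^ j / 3⌋) - 2 ^ j))
  have three_dvd : (3 : ℤ) ∣ 2 ^ j := ⟨⌊b⌋ - ⌊b - 2 ^ j / 3⌋, by omega⟩
  have := Int.prime_three.dvd_of_dvd_pow three_dvd
  omega

/-- The dyadic grid translated by `1 / 3` in the coordinates selected by `t`; any two nearby points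
share a cell of comparable size in one of these grids. -/
def thirdGrid (n : ℕ) (t : Fin n → Bool) : Grid n :=
  shiftedGrid n fun i => if t i then 1 / 3 else 0

theorem exists_thirdGrid_cell_eq {j : ℕ} {x y : En n} (h : ‖x - y‖ * 2 ^ j ≤ 1 / 3) :
    ∃ t, (thirdGrid n t).cell j x = (thirdGrid n t).cell j y := by
  have coord : ∀ i, ∃ b : Bool, ⌊(2 : ℝ) ^ j * (x i - (if b then 1 / 3 else 0))⌋ =
      ⌊(2 : ℝ) ^ j * (y i - (if b then 1 / 3 else 0))⌋ := fun i => by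
    have close : |(2 : ℝ) ^ j * x i - 2 ^ j * y i| ≤ 1 / 3 := by
      rw [← mul_sub, abs_mul, abs_of_pos (by positivity), mul_comm]
      refine le_trans ?_ h
      gcongr
      simpa using PiLp.norm_apply_le (x - y) i
    rcases floor_eq_or_floor_sub_eq j close with h | h
    · exact ⟨false, by simpa using h⟩
    · exact ⟨true, by simpa [mul_sub, div_eq_mul_inv] using h⟩
  choose t ht using coord
  exact ⟨t, funext ht⟩

end ShiftedGrid

section Eta

variable {n v : ℕ} {h : ℝ} {z : En n}

theorem measurable_eta (n v : ℕ) (h : ℝ) : Measurable (eta n v h) := by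
  unfold eta
  fun_prop

theorem eta_nonneg (n v : ℕ) (h : ℝ) (z : En n) : 0 ≤ eta n v h z := by
  unfold eta
  positivity

theorem eta_zero (n : ℕ) (h : ℝ) (z : En n) : eta n 0 h z = (1 + ‖z‖) ^ (-h) := by
  simp [eta]

theorem eta_zero_le_one (hh : 0 ≤ h) (z : En n) : eta n 0 h z ≤ 1 := by
  rw [eta_zero]
  exact Real.rpow_le_one_of_one_le_of_nonpos (by simp) (neg_nonpos.2 hh)

theorem lintegral_eta_zero_lt_top (hh : (n : ℝ) < h) :
    ∫⁻ z : En n, ENNReal.ofReal (eta n 0 h z) < ∞ := by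
  simp only [eta_zero]
  exact finite_integral_one_add_norm (by simpa using hh)

theorem two_pow_mul_two_pow_rpow_neg {k : ℕ} (hk : k ≤ v) (h : ℝ) :
    (2 : ℝ) ^ (n * v) * ((2 : ℝ) ^ k) ^ (-h) = (2 ^ ((n : ℝ) - h)) ^ k * 2 ^ (n * (v - k)) := by
  simp only [← Real.rpow_natCast, ← Real.rpow_mul zero_le_two, ← Real.rpow_add zero_lt_two]
  congr 1
  push_cast [hk]
  ring

theorem eta_le_of_le_six_mul (hh : 0 ≤ h) {s : ℝ} (hs : 0 < s) (hsz : s ≤ 6 * (1 + 2 ^ v * ‖z‖)) :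
    eta n v h z ≤ 6 ^ h * (2 ^ (n * v) * s ^ (-h)) := by
  have : (1 + 2 ^ v * ‖z‖) ^ (-h) ≤ 6 ^ h * s ^ (-h) :=
    calc (1 + 2 ^ v * ‖z‖) ^ (-h) ≤ (s / 6) ^ (-h) :=
          Real.rpow_le_rpow_of_nonpos (by positivity) (by linarith) (neg_nonpos.2 hh)
      _ = 6 ^ h * s ^ (-h) := by
          rw [Real.div_rpow hs.le (by norm_num), Real.rpow_neg (x := 6) (by norm_num),
            div_inv_eq_mul, mul_comm]
  rw [eta, mul_left_comm]
  gcongr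

theorem eta_le_eta_zero (hh : 0 ≤ h) (hz : 1 / 3 ≤ ‖z‖) :
    eta n v h z ≤ 6 ^ h * ((2 ^ ((n : ℝ) - h)) ^ v * eta n 0 h z) := by
  have hs : 2 ^ v * (1 + ‖z‖) ≤ 6 * (1 + 2 ^ v * ‖z‖) := by
    have : (2 : ℝ) ^ v * (1 + ‖z‖) ≤ 2 ^ v * (4 * ‖z‖) := by gcongr; linarith
    have : 0 ≤ (2 : ℝ) ^ v * ‖z‖ := by positivity
    linarith
  refine (eta_le_of_le_six_mul hh (by positivity) hs).trans_eq ?_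
  rw [Real.mul_rpow (by positivity) (by positivity), ← mul_assoc ((2 : ℝ) ^ (n * v)),
    two_pow_mul_two_pow_rpow_neg le_rfl, Nat.sub_self, mul_zero, pow_zero, mul_one, eta_zero]

theorem exists_two_pow_near {a : ℝ} (ha : 0 ≤ a) (hav : 3 * a ≤ 2 ^ v) :
    ∃ k ≤ v, 3 * a ≤ 2 ^ k ∧ 2 ^ k ≤ 6 * (1 + a) := by
  have hex : ∃ k, 3 * a ≤ 2 ^ k := ⟨v, hav⟩
  classical
  refine ⟨Nat.find hex, Nat.find_min' hex hav, Nat.find_spec hex, ?_⟩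
  rcases hk : Nat.find hex with - | k
  · rw [pow_zero]
    linarith
  · have := Nat.find_min hex (m := k) (by omega)
    rw [pow_succ]
    linarith

theorem exists_eta_le_of_norm_le (hh : 0 ≤ h) (hz : ‖z‖ ≤ 1 / 3) :
    ∃ k ≤ v, ‖z‖ * 2 ^ (v - k) ≤ 1 / 3 ∧
      eta n v h z ≤ 6 ^ h * ((2 ^ ((n : ℝ) - h)) ^ k * 2 ^ (n * (v - k))) := by
  have h2 : (0 : ℝ) < 2 ^ v := by positivity
  obtain ⟨k, hk, hle, hge⟩ := exists_two_pow_near (v := v) (a := 2 ^ v * ‖z‖) (by positivity)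
    (by nlinarith)
  refine ⟨k, hk, ?_, ?_⟩
  · rw [pow_sub₀ _ two_ne_zero hk, ← div_eq_mul_inv, ← mul_div_assoc, div_le_iff₀ (by positivity)]
    linarith
  · rw [← two_pow_mul_two_pow_rpow_neg hk]
    exact eta_le_of_le_six_mul hh (by positivity) hge

end Eta

section EtaConvolution

variable {n : ℕ} {h : ℝ}

/-- The factor `2^{n-h} < 1` gained by the kernel `η_{v,h}` each time its argument doubles. -/
def decay (n : ℕ) (h : ℝ) : ℝ≥0∞ :=
  ENNReal.ofReal (2 ^ ((n : ℝ) - h))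

theorem decay_ne_zero (n : ℕ) (h : ℝ) : decay n h ≠ 0 :=
  (ENNReal.ofReal_pos.2 (by positivity)).ne'

theorem decay_ne_top (n : ℕ) (h : ℝ) : decay n h ≠ ∞ :=
  ENNReal.ofReal_ne_top

theorem tsum_decay_pow_ne_top (hh : (n : ℝ) < h) : ∑' k : ℕ, decay n h ^ k ≠ ∞ := by
  have : decay n h < 1 :=
    ENNReal.ofReal_lt_one.2 (Real.rpow_lt_one_of_one_lt_of_neg one_lt_two (sub_neg.2 hh))
  rw [ENNReal.tsum_geometric]
  exact ENNReal.inv_ne_top.2 (tsub_pos_of_lt this).ne'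

theorem ofReal_const_mul_decay (k : ℕ) (b : ℝ) :
    ENNReal.ofReal (6 ^ h * ((2 ^ ((n : ℝ) - h)) ^ k * b)) =
      ENNReal.ofReal (6 ^ h) * (decay n h ^ k * ENNReal.ofReal b) := by
  rw [ENNReal.ofReal_mul (by positivity), ENNReal.ofReal_mul (by positivity),
    ENNReal.ofReal_pow (by positivity), decay]

theorem ofReal_eta_le (hh : 0 ≤ h) (v : ℕ) (x y : En n) :
    ENNReal.ofReal (eta n v h (x - y)) ≤ ENNReal.ofReal (6 ^ h) *
      ((∑' i : ℕ × (Fin n → Bool), decay n h ^ i.1 * if i.1 ≤ v then 2 ^ (n * (v - i.1)) *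
        {y | (thirdGrid n i.2).cell (v - i.1) y = (thirdGrid n i.2).cell (v - i.1) x}.indicator 1 y
          else 0) + decay n h ^ v * ENNReal.ofReal (eta n 0 h (x - y))) := by
  rcases le_total ‖x - y‖ (1 / 3) with near | far
  · obtain ⟨k, hk, hxy, hle⟩ := exists_eta_le_of_norm_le (v := v) hh near
    obtain ⟨t, ht⟩ := exists_thirdGrid_cell_eq hxy
    refine (ENNReal.ofReal_le_ofReal hle).trans ?_
    rw [ofReal_const_mul_decay, ENNReal.ofReal_pow zero_le_two, ofReal_ofNat]
    gcongr
    refine le_trans ?_ (le_add_right (ENNReal.le_tsum (k, t)))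
    simp [hk, ht]
  · refine (ENNReal.ofReal_le_ofReal (eta_le_eta_zero hh far)).trans ?_
    rw [ofReal_const_mul_decay]
    gcongr
    exact le_add_self

theorem lintegral_eta_mul_le (hh : 0 ≤ h) (v : ℕ) {F : En n → ℝ≥0∞} (hF : Measurable F)
    (x : En n) :
    ∫⁻ y, ENNReal.ofReal (eta n v h (x - y)) * F y ≤ ENNReal.ofReal (6 ^ h) *
      ((∑' i : ℕ × (Fin n → Bool), decay n h ^ i.1 *
        if i.1 ≤ v then (thirdGrid n i.2).avg (v - i.1) F x else 0) +
          decay n h ^ v * ∫⁻ y, ENNReal.ofReal (eta n 0 h (x - y)) * F y) := by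
  set A : ℕ × (Fin n → Bool) → Set (En n) := fun i =>
    {y | (thirdGrid n i.2).cell (v - i.1) y = (thirdGrid n i.2).cell (v - i.1) x}
  have hA : ∀ i, MeasurableSet (A i) := fun i => (thirdGrid n i.2).measurableSet_cell _ _
  have hAF : ∀ i, Measurable fun y => decay n h ^ i.1 *
      if i.1 ≤ v then 2 ^ (n * (v - i.1)) * (A i).indicator F y else 0 := fun i => by
    split_ifs
    · exact ((hF.indicator (hA i)).const_mul _).const_mul _
    · fun_prop
  have hη : Measurable fun y => ENNReal.ofReal (eta n 0 h (x - y)) * F y := by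
    have := measurable_eta n 0 h
    fun_prop
  calc ∫⁻ y, ENNReal.ofReal (eta n v h (x - y)) * F y
      ≤ ∫⁻ y, ENNReal.ofReal (6 ^ h) * ((∑' i : ℕ × (Fin n → Bool), decay n h ^ i.1 *
          if i.1 ≤ v then 2 ^ (n * (v - i.1)) * (A i).indicator F y else 0) +
            decay n h ^ v * (ENNReal.ofReal (eta n 0 h (x - y)) * F y)) := by
        refine lintegral_mono fun y => (mul_le_mul_left (ofReal_eta_le hh v x y) (F y)).trans_eq ?_
        simp only [mul_assoc, add_mul, ← ENNReal.tsum_mul_right, ite_mul, zero_mul]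
        simp only [A, indicator_apply, Pi.one_apply, ite_mul, one_mul, zero_mul]
    _ = _ := by
        rw [lintegral_const_mul' _ _ ENNReal.ofReal_ne_top, lintegral_add_right _ (hη.const_mul _),
          lintegral_tsum fun i => (hAF i).aemeasurable, lintegral_const_mul _ hη]
        congr 3
        ext i
        rw [lintegral_const_mul' _ _ (ENNReal.pow_ne_top (decay_ne_top n h))]
        split_ifs
        · rw [lintegral_const_mul _ (hF.indicator (hA i)), lintegral_indicator (hA i), Grid.avg]
        · rw [lintegral_zero]

end EtaConvolution

section MixedNorm

variable {n : ℕ} {p q : En n → ℝ} {h : ℝ}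

theorem lconvolution_ofReal_eta (v : ℕ) (f : En n → ℝ≥0∞) (x : En n) :
    ((fun z => ENNReal.ofReal (eta n v h z)) ⋆ₗ f) x =
      ∫⁻ y, ENNReal.ofReal (eta n v h (x - y)) * f y := by
  rw [lconvolution_comm, lconvolution_def]
  simp only [neg_add_eq_sub, mul_comm (f _)]

theorem GlobLogHolder.exists_luxNorm_lintegral_eta_zero_mul_le {c : ℝ} (hp : GlobLogHolder c p)
    (hp1 : ∀ x, 1 ≤ p x) (hh : (n : ℝ) < h) :
    ∃ C : ℝ≥0∞, C ≠ ∞ ∧ ∀ f : En n → ℝ≥0∞, Measurable f →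
      luxNorm p (fun x => ∫⁻ y, ENNReal.ofReal (eta n 0 h (x - y)) * f y) ≤ C * luxNorm p f := by
  obtain ⟨C, hC, hconv⟩ := hp.exists_luxNorm_lconvolution_le hp1
  set k : En n → ℝ≥0∞ := fun z => ENNReal.ofReal (eta n 0 h z)
  have hk : Measurable k := (measurable_eta n 0 h).ennreal_ofReal
  have hk1 : ∀ z, k z ≤ 1 := fun z =>
    ENNReal.ofReal_le_one.2 (eta_zero_le_one (n.cast_nonneg.trans hh.le) z)
  set M := ∫⁻ z, k z
  have hM : M ≠ ∞ := (lintegral_eta_zero_lt_top hh).ne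
  have hM1 : 1 + M ≠ 0 := (zero_lt_one.trans_le le_self_add).ne'
  have hM1' : 1 + M ≠ ∞ := by finiteness
  refine ⟨(1 + M) * C, by finiteness, fun f hf => ?_⟩
  have normalize : ∀ x, (k ⋆ₗ f) x = (1 + M) * ((fun z => (1 + M)⁻¹ * k z) ⋆ₗ f) x := fun x => by
    simp only [lconvolution_def, mul_assoc]
    rw [lintegral_const_mul _ (by fun_prop), ← mul_assoc, ENNReal.mul_inv_cancel hM1 hM1', one_mul]
  have mass : ∫⁻ z, (1 + M)⁻¹ * k z ≤ 1 := by
    rw [lintegral_const_mul _ hk, mul_comm]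
    exact ENNReal.div_le_of_le_mul (by rw [one_mul]; exact le_add_self)
  have sup : ∀ z, (1 + M)⁻¹ * k z ≤ 1 := fun z =>
    mul_le_one' (ENNReal.inv_le_one.2 le_self_add) (hk1 z)
  simp_rw [← lconvolution_ofReal_eta]
  rw [funext normalize, mul_assoc]
  refine (luxNorm_const_mul_le p _ hM1 hM1').trans ?_
  gcongr
  exact hconv _ f (hk.const_mul _) mass sup hf

theorem Grid.measurable_avg_sub (G : Grid n) (v k : ℕ) (f : En n → ℝ≥0∞) :
    Measurable fun x => if k ≤ v then G.avg (v - k) f x else 0 := by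
  split_ifs
  exacts [G.measurable_avg _ f, measurable_const]

theorem Grid.mixedNorm_avg_sub_le (G : Grid n) (hp : ∀ x, 0 ≤ p x) (hq : ∀ x, 0 < q x) {C : ℝ≥0∞}
    (hG : ∀ F : ℕ → En n → ℝ≥0∞, (∀ v, Measurable (F v)) →
      mixedNorm p q (fun v => G.avg v (F v)) ≤ C * mixedNorm p q F)
    {F : ℕ → En n → ℝ≥0∞} (hF : ∀ v, Measurable (F v)) (k : ℕ) :
    mixedNorm p q (fun v x => if k ≤ v then G.avg (v - k) (F v) x else 0) ≤ C * mixedNorm p q F :=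
  calc _ = mixedNorm p q fun v => G.avg v (F (v + k)) := by
        simpa only [Nat.add_sub_cancel] using
          mixedNorm_zero_pad p hq (fun v => G.avg (v - k) (F v)) k
    _ ≤ C * mixedNorm p q fun v => F (v + k) := hG _ fun v => hF (v + k)
    _ ≤ C * mixedNorm p q F := by gcongr; exact mixedNorm_comp_add_le hp hq F k

theorem mixedNorm_tsum_avg_sub_le (hpm : Measurable p) (hp : ∀ x, 1 ≤ p x) (hqm : Measurable q)
    (hq : ∀ x, 1 ≤ q x) {C : (Fin n → Bool) → ℝ≥0∞}
    (hG : ∀ t, ∀ F : ℕ → En n → ℝ≥0∞, (∀ v, Measurable (F v)) →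
      mixedNorm p q (fun v => (thirdGrid n t).avg v (F v)) ≤ C t * mixedNorm p q F)
    {F : ℕ → En n → ℝ≥0∞} (hF : ∀ v, Measurable (F v)) :
    mixedNorm p q (fun v x => ∑' i : ℕ × (Fin n → Bool), decay n h ^ i.1 *
      if i.1 ≤ v then (thirdGrid n i.2).avg (v - i.1) (F v) x else 0) ≤
        (∑' k, decay n h ^ k) * (∑ t, C t) * mixedNorm p q F := by
  have hp0 : ∀ x, 0 ≤ p x := fun x => zero_le_one.trans (hp x)
  have hq0 : ∀ x, 0 < q x := fun x => zero_lt_one.trans_le (hq x)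
  calc _ ≤ ∑' i : ℕ × (Fin n → Bool), mixedNorm p q fun v x => decay n h ^ i.1 *
          if i.1 ≤ v then (thirdGrid n i.2).avg (v - i.1) (F v) x else 0 :=
        mixedNorm_tsum_le hpm hp hqm hq fun i v =>
          ((thirdGrid n i.2).measurable_avg_sub v i.1 (F v)).const_mul _
    _ ≤ ∑' i : ℕ × (Fin n → Bool), decay n h ^ i.1 * (C i.2 * mixedNorm p q F) := by
        gcongr with i
        refine (mixedNorm_const_mul_le p hq0 _ (pow_ne_zero _ (decay_ne_zero n h))
          (ENNReal.pow_ne_top (decay_ne_top n h))).trans ?_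
        gcongr
        exact (thirdGrid n i.2).mixedNorm_avg_sub_le hp0 hq0 (hG i.2) hF i.1
    _ = _ := by
        rw [ENNReal.tsum_prod (f := fun k t => decay n h ^ k * (C t * mixedNorm p q F))]
        simp only [tsum_fintype, ← Finset.mul_sum, ← Finset.sum_mul, ENNReal.tsum_mul_right,
          mul_assoc]

theorem mixedNorm_decay_mul_lintegral_eta_zero_le (hp : ∀ x, 0 ≤ p x) (hqm : Measurable q)
    (hq : ∀ x, 1 ≤ q x) (hh : (n : ℝ) < h) {C : ℝ≥0∞}
    (hη : ∀ f : En n → ℝ≥0∞, Measurable f →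
      luxNorm p (fun x => ∫⁻ y, ENNReal.ofReal (eta n 0 h (x - y)) * f y) ≤ C * luxNorm p f)
    {F : ℕ → En n → ℝ≥0∞} (hF : ∀ v, Measurable (F v)) :
    mixedNorm p q (fun v x => decay n h ^ v *
      ∫⁻ y, ENNReal.ofReal (eta n 0 h (x - y)) * F v y) ≤
        (∑' k, decay n h ^ k) * C * mixedNorm p q F := by
  have hsum0 : ∑' k, decay n h ^ k ≠ 0 := fun h0 => by simpa using ENNReal.tsum_eq_zero.1 h0 0
  simp_rw [mixedNorm_eq_luxNorm]
  calc _ ≤ luxNorm p fun x => (∑' k, decay n h ^ k) *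
          ∫⁻ y, ENNReal.ofReal (eta n 0 h (x - y)) * ellNorm (q y) (F · y) := by
        refine luxNorm_mono hp fun x => (ellNorm_le_tsum (hq x) _).trans ?_
        rw [← ENNReal.tsum_mul_right]
        gcongr with v y
        exact le_ellNorm (zero_lt_one.trans_le (hq y)) (F · y) v
    _ ≤ (∑' k, decay n h ^ k) * (C * luxNorm p fun x => ellNorm (q x) (F · x)) :=
        (luxNorm_const_mul_le p _ hsum0 (tsum_decay_pow_ne_top hh)).trans <| by
          gcongr
          exact hη _ (measurable_ellNorm hqm hF)
    _ = _ := by rw [mul_assoc]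

theorem mixedNorm_lintegral_eta_mul_le (hpm : Measurable p) (hp : ∀ x, 1 ≤ p x)
    (hqm : Measurable q) (hq : ∀ x, 1 ≤ q x) (hh : (n : ℝ) < h) {B : ℝ≥0∞}
    {C : (Fin n → Bool) → ℝ≥0∞}
    (hG : ∀ t, ∀ F : ℕ → En n → ℝ≥0∞, (∀ v, Measurable (F v)) →
      mixedNorm p q (fun v => (thirdGrid n t).avg v (F v)) ≤ C t * mixedNorm p q F)
    (hη : ∀ f : En n → ℝ≥0∞, Measurable f →
      luxNorm p (fun x => ∫⁻ y, ENNReal.ofReal (eta n 0 h (x - y)) * f y) ≤ B * luxNorm p f)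
    {F : ℕ → En n → ℝ≥0∞} (hF : ∀ v, Measurable (F v)) :
    mixedNorm p q (fun v x => ∫⁻ y, ENNReal.ofReal (eta n v h (x - y)) * F v y) ≤
      ENNReal.ofReal (6 ^ h) * ((∑' k, decay n h ^ k) * (∑ t, C t + B)) * mixedNorm p q F := by
  have hp0 : ∀ x, 0 ≤ p x := fun x => zero_le_one.trans (hp x)
  have hq0 : ∀ x, 0 < q x := fun x => zero_lt_one.trans_le (hq x)
  have hh0 : 0 ≤ h := n.cast_nonneg.trans hh.le
  have near_meas : ∀ v, Measurable fun x => ∑' i : ℕ × (Fin n → Bool), decay n h ^ i.1 *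
      if i.1 ≤ v then (thirdGrid n i.2).avg (v - i.1) (F v) x else 0 := fun v =>
    .tsum fun i => ((thirdGrid n i.2).measurable_avg_sub v i.1 (F v)).const_mul _
  have far_meas : ∀ v, Measurable fun x =>
      decay n h ^ v * ∫⁻ y, ENNReal.ofReal (eta n 0 h (x - y)) * F v y := fun v => by
    simp_rw [← lconvolution_ofReal_eta]
    exact (measurable_lconvolution _ (measurable_eta n 0 h).ennreal_ofReal (hF v)).const_mul _
  calc _ ≤ ENNReal.ofReal (6 ^ h) * mixedNorm p q fun v x => _ :=
        (mixedNorm_mono hp0 hq0 fun v x => lintegral_eta_mul_le hh0 v (hF v) x).trans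
          (mixedNorm_const_mul_le p hq0 _ (by positivity) ENNReal.ofReal_ne_top)
    _ ≤ ENNReal.ofReal (6 ^ h) * ((∑' k, decay n h ^ k) * (∑ t, C t) * mixedNorm p q F +
          (∑' k, decay n h ^ k) * B * mixedNorm p q F) := by
        gcongr
        exact (mixedNorm_add_le hpm hp hqm hq near_meas far_meas).trans (add_le_add
          (mixedNorm_tsum_avg_sub_le hpm hp hqm hq hG hF)
          (mixedNorm_decay_mul_lintegral_eta_zero_le hp0 hqm hq hh hη hF))
    _ = _ := by ring

end MixedNorm

theorem stmt2_general {n : ℕ} (p q : En n → ℝ) (hp : ∃ c, GlobLogHolder c p)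
    (hq : ∃ c, GlobLogHolder c fun x => 1 / q x) (hpb : ∃ a, 1 < a ∧ ∀ x, a ≤ p x)
    (hqb : ∀ x, 1 ≤ q x) (h : ℝ) (hh : (n : ℝ) < h) :
    ∃ c : ℝ, 0 < c ∧ ∀ F : ℕ → En n → ℝ≥0∞, (∀ v, Measurable (F v)) →
      mixedNorm p q (fun v x => ∫⁻ y, ENNReal.ofReal (eta n v h (x - y)) * F v y) ≤
        ENNReal.ofReal c * mixedNorm p q F := by
  obtain ⟨_, hp⟩ := hp
  obtain ⟨_, hq⟩ := hq
  obtain ⟨a, ha, hap⟩ := hpb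
  obtain ⟨P, hP⟩ := hp.exists_forall_le
  have hp1 : ∀ x, 1 ≤ p x := fun x => ha.le.trans (hap x)
  have hpm : Measurable p := hp.continuous.measurable
  have hqm : Measurable q := by simpa using hq.continuous.measurable.const_div 1
  choose C₀ hpG using fun t => (thirdGrid n t).exists_isLogHolder hp
  choose C₁ hqG using fun t => (thirdGrid n t).exists_isLogHolder hq
  choose C hC havg using fun t =>
    (thirdGrid n t).exists_mixedNorm_avg_le hpm (hpG t) ha hap hP hqm (hqG t) hqb
  obtain ⟨B, hB, hη⟩ := hp.exists_luxNorm_lintegral_eta_zero_mul_le hp1 hh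
  set D := ENNReal.ofReal (6 ^ h) * ((∑' k, decay n h ^ k) * (∑ t, C t + B))
  have hS := tsum_decay_pow_ne_top hh
  have hsum : ∑ t, C t ≠ ∞ := (ENNReal.sum_lt_top.2 fun t _ => (hC t).lt_top).ne
  have hD : D ≠ ∞ := by finiteness
  refine ⟨D.toReal + 1, by positivity, fun F hF => ?_⟩
  calc _ ≤ D * mixedNorm p q F := mixedNorm_lintegral_eta_mul_le hpm hp1 hqm hqb hh havg hη hF
    _ ≤ ENNReal.ofReal (D.toReal + 1) * mixedNorm p q F := by
        gcongr
        exact (ENNReal.ofReal_toReal hD).symm.trans_le (ENNReal.ofReal_le_ofReal (by simp))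

/-- boundedness of the convolution with `η_{v,h}`, `h > n`, on
`L^{p(·)}(ℓ_{q(·)})` for globally log-Hölder exponents with `1 < p⁻ ≤ p⁺ < ∞`,
`1 < q⁻ ≤ q⁺ < ∞`. -/
theorem stmt2 {n : ℕ} (p q : En n → ℝ)
    (hp : ∃ c, GlobLogHolder c p) (hq : ∃ c, GlobLogHolder c q)
    (hpb : ∃ a b : ℝ, 1 < a ∧ ∀ x, a ≤ p x ∧ p x ≤ b)
    (hqb : ∃ a b : ℝ, 1 < a ∧ ∀ x, a ≤ q x ∧ q x ≤ b)
    (h : ℝ) (hh : (n : ℝ) < h) :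
    ∃ c : ℝ, 0 < c ∧ ∀ f : ℕ → En n → ℝ, (∀ v, Measurable (f v)) →
      mixedNorm p q
          (fun v x => ∫⁻ y, ENNReal.ofReal (eta n v h (x - y) * |f v y|)) ≤
        ENNReal.ofReal c * mixedNorm p q (fun v x => ENNReal.ofReal |f v x|) := by
  obtain ⟨a, _, ha, hpa⟩ := hpb
  obtain ⟨b, _, hb, hqb⟩ := hqb
  have hq1 : ∀ x, 1 ≤ q x := fun x => hb.le.trans (hqb x).1
  obtain ⟨c, hc, hbound⟩ := stmt2_general p q hp (hq.imp fun _ hq => hq.one_div hq1)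
    ⟨a, ha, fun x => (hpa x).1⟩ hq1 h hh
  refine ⟨c, hc, fun f hf => ?_⟩
  simpa only [ENNReal.ofReal_mul (eta_nonneg _ _ _ _)] using
    hbound _ fun v => (hf v).abs.ennreal_ofReal
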